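/- arXiv:2401.10093 — 4 statements merged into one kernel-verified Lean document; each statement's English description precedes it below -/
import Mathlib

section
/- Let M and M' be representations of the barbell quiver with potential whose maps f_c are isomorphisms, and let N and N' be finite direct sums of string modules M(acb(c⁻¹acb)ⁿ) with n ≥ 0. If M ⊕ N ≅ M' ⊕ N', then M ≅ M' and N ≅ N'. In other words, the decomposition of a representation as a direct sum of a representation with f_c invertible and a direct sum of the string modules M(acb(c⁻¹acb)ⁿ) is unique up to isomorphism. -/
/-!
# Statement 9

Work over `ℂ`.  The barbell quiver has vertices `1` and `2`, a loop `a` at vertex `1`, a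
loop `b` at vertex `2`, and an arrow `c : 1 → 2`; its potential is `W = a³ + b³`, whose
Jacobian relations are `a² = 0` and `b² = 0`.  Let `M` and `M'` be representations of the
barbell quiver with potential whose maps `f_c` are isomorphisms, and let `N` and `N'` be
finite direct sums of string modules `M(acb(c⁻¹acb)ⁿ)` with `n ≥ 0`.  If `M ⊕ N ≅ M' ⊕ N'`,
then `M ≅ M'` and `N ≅ N'`.
-/

noncomputable section
open Module

/-- A representation of the barbell quiver with potential `W = a³ + b³`: finite-dimensional
`ℂ`-vector spaces `V1, V2` and linear maps `fa : V1 → V1`, `fb : V2 → V2`, `fc : V1 → V2`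
satisfying the Jacobian relations `fa ∘ fa = 0` and `fb ∘ fb = 0`. -/
structure BarbellRep where
  V1 : Type
  V2 : Type
  [acg1 : AddCommGroup V1]
  [acg2 : AddCommGroup V2]
  [mod1 : Module ℂ V1]
  [mod2 : Module ℂ V2]
  [fd1 : FiniteDimensional ℂ V1]
  [fd2 : FiniteDimensional ℂ V2]
  fa : V1 →ₗ[ℂ] V1
  fb : V2 →ₗ[ℂ] V2
  fc : V1 →ₗ[ℂ] V2
  rel_a : fa ∘ₗ fa = 0
  rel_b : fb ∘ₗ fb = 0

attribute [instance] BarbellRep.acg1 BarbellRep.acg2 BarbellRep.mod1 BarbellRep.mod2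
  BarbellRep.fd1 BarbellRep.fd2

namespace BarbellRep

/-- The dimension vector `(dim V1, dim V2)`. -/
def dimVec (M : BarbellRep) : ℕ × ℕ := (finrank ℂ M.V1, finrank ℂ M.V2)

/-- A subrepresentation: a pair of submodules closed under the structure maps. -/
structure Sub (M : BarbellRep) where
  S1 : Submodule ℂ M.V1
  S2 : Submodule ℂ M.V2
  mapsto_a : ∀ x ∈ S1, M.fa x ∈ S1
  mapsto_b : ∀ y ∈ S2, M.fb y ∈ S2
  mapsto_c : ∀ x ∈ S1, M.fc x ∈ S2

/-- The dimension vector of a subrepresentation. -/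
def Sub.dimVec {M : BarbellRep} (L : M.Sub) : ℕ × ℕ := (finrank ℂ L.S1, finrank ℂ L.S2)

/-- The subrepresentation is nonzero. -/
def Sub.Nonzero {M : BarbellRep} (L : M.Sub) : Prop := L.S1 ≠ ⊥ ∨ L.S2 ≠ ⊥

/-- The subrepresentation is proper. -/
def Sub.Proper {M : BarbellRep} (L : M.Sub) : Prop := L.S1 ≠ ⊤ ∨ L.S2 ≠ ⊤

end BarbellRep

/-- Isomorphism of barbell representations. -/
def RepIso (M N : BarbellRep) : Prop :=
  ∃ (e1 : M.V1 ≃ₗ[ℂ] N.V1) (e2 : M.V2 ≃ₗ[ℂ] N.V2),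
    (∀ x, e1 (M.fa x) = N.fa (e1 x)) ∧ (∀ y, e2 (M.fb y) = N.fb (e2 y)) ∧
      (∀ x, e2 (M.fc x) = N.fc (e1 x))

/-- Componentwise direct sum of barbell representations. -/
def dsum (M N : BarbellRep) : BarbellRep where
  V1 := M.V1 × N.V1
  V2 := M.V2 × N.V2
  fa := M.fa.prodMap N.fa
  fb := M.fb.prodMap N.fb
  fc := M.fc.prodMap N.fc
  rel_a := by
    apply LinearMap.ext
    rintro ⟨x, y⟩
    have h1 := LinearMap.congr_fun M.rel_a x
    have h2 := LinearMap.congr_fun N.rel_a y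
    simp only [LinearMap.comp_apply, LinearMap.prodMap_apply, LinearMap.zero_apply] at h1 h2 ⊢
    simp [h1, h2]
  rel_b := by
    apply LinearMap.ext
    rintro ⟨x, y⟩
    have h1 := LinearMap.congr_fun M.rel_b x
    have h2 := LinearMap.congr_fun N.rel_b y
    simp only [LinearMap.comp_apply, LinearMap.prodMap_apply, LinearMap.zero_apply] at h1 h2 ⊢
    simp [h1, h2]

/-- The zero representation. -/
def zeroRep : BarbellRep where
  V1 := Fin 0 → ℂ
  V2 := Fin 0 → ℂ
  fa := 0
  fb := 0
  fc := 0
  rel_a := by simp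
  rel_b := by simp

/-- Direct sum of a finite list of barbell representations. -/
def dsumList (l : List BarbellRep) : BarbellRep := l.foldr dsum zeroRep

/-! ## The string modules `M(acb(c⁻¹acb)ⁿ)`

The walk `acb(c⁻¹acb)ⁿ` has length `4n + 3` and `4n + 4` vertex-instances `z₀, …, z_{4n+3}`,
where `z_{4k}, z_{4k+1}` lie at vertex `1` and `z_{4k+2}, z_{4k+3}` lie at vertex `2`
(`0 ≤ k ≤ n`).  We realise the string module with
`V1 = V2 = (Fin (n+1) × Bool) → ℂ`, where `(k, false)` indexes `z_{4k}` in `V1` (resp.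
`z_{4k+2}` in `V2`) and `(k, true)` indexes `z_{4k+1}` in `V1` (resp. `z_{4k+3}` in `V2`).
The structure maps of the string module are:
`f_a(z_{4k}) = z_{4k+1}`, `f_b(z_{4k+2}) = z_{4k+3}`, `f_c(z_{4k+1}) = z_{4k+2}` (letter `c`)
and `f_c(z_{4k+4}) = z_{4k+3}` (letter `c⁻¹`), all other basis vectors mapping to `0`. -/

/-- The map sending the basis vector indexed `(k, false)` to the one indexed `(k, true)`
and killing the others; this is `f_a` (and also `f_b`) of the string module. -/
def strFa (n : ℕ) : ((Fin (n + 1) × Bool) → ℂ) →ₗ[ℂ] ((Fin (n + 1) × Bool) → ℂ) where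
  toFun v p := if p.2 then v (p.1, false) else 0
  map_add' u v := by
    funext p
    by_cases h : p.2 <;> simp [h]
  map_smul' c v := by
    funext p
    by_cases h : p.2 <;> simp [h]

/-- The map `f_c` of the string module `M(acb(c⁻¹acb)ⁿ)`:
`f_c(z_{4k+1}) = z_{4k+2}` and `f_c(z_{4k+4}) = z_{4k+3}`, i.e. the coefficient of the output
at `z_{4k+2}` is the input coefficient at `z_{4k+1}`, and the coefficient of the output at
`z_{4k+3}` is the input coefficient at `z_{4k+4}` (when `k + 1 ≤ n`). -/
def strFc (n : ℕ) : ((Fin (n + 1) × Bool) → ℂ) →ₗ[ℂ] ((Fin (n + 1) × Bool) → ℂ) where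
  toFun v p :=
    if p.2 then
      (if h : (p.1 : ℕ) + 1 < n + 1 then v (⟨(p.1 : ℕ) + 1, h⟩, false) else 0)
    else v (p.1, true)
  map_add' u v := by
    funext p
    by_cases h : p.2
    · simp only [h, if_true, Pi.add_apply]
      split <;> simp
    · simp [h]
  map_smul' c v := by
    funext p
    by_cases h : p.2
    · simp only [h, if_true, Pi.smul_apply, RingHom.id_apply]
      split <;> simp
    · simp [h]

/-- The string module `M(acb(c⁻¹acb)ⁿ)`. -/
def Mstring (n : ℕ) : BarbellRep where
  V1 := (Fin (n + 1) × Bool) → ℂ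
  V2 := (Fin (n + 1) × Bool) → ℂ
  fa := strFa n
  fb := strFa n
  fc := strFc n
  rel_a := by
    apply LinearMap.ext
    intro v
    funext p
    by_cases h : p.2 <;> simp [strFa, h]
  rel_b := by
    apply LinearMap.ext
    intro v
    funext p
    by_cases h : p.2 <;> simp [strFa, h]

def HomZero (N M : BarbellRep) : Prop :=
  ∀ (g1 : N.V1 →ₗ[ℂ] M.V1) (g2 : N.V2 →ₗ[ℂ] M.V2),
    (∀ x, g1 (N.fa x) = M.fa (g1 x)) → (∀ y, g2 (N.fb y) = M.fb (g2 y)) →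
      (∀ x, g2 (N.fc x) = M.fc (g1 x)) → (∀ x, g1 x = 0) ∧ (∀ y, g2 y = 0)

theorem strFa_single (n : ℕ) (k : Fin (n + 1)) :
    strFa n (Pi.single (k, false) 1) = Pi.single (k, true) 1 := by
  funext p
  obtain ⟨i, b⟩ := p
  cases b <;> simp [strFa, Pi.single_apply]

theorem strFc_single_true (n : ℕ) (k : Fin (n + 1)) :
    strFc n (Pi.single (k, true) 1) = Pi.single (k, false) 1 := by
  funext p
  obtain ⟨i, b⟩ := p
  cases b <;> simp [strFc, Pi.single_apply]

theorem strFc_single_zero (n : ℕ) (h0 : 0 < n + 1) :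
    strFc n (Pi.single (⟨0, h0⟩, false) 1) = 0 := by
  funext p
  obtain ⟨i, b⟩ := p
  cases b <;> simp [strFc, Pi.single_apply]

theorem strFc_single_succ (n k : ℕ) (h : k + 1 < n + 1) (h' : k < n + 1) :
    strFc n (Pi.single (⟨k + 1, h⟩, false) 1) = Pi.single (⟨k, h'⟩, true) 1 := by
  funext p
  obtain ⟨⟨i, hi⟩, b⟩ := p
  cases b
  · simp [strFc, Pi.single_apply]
  · simp only [strFc, Pi.single_apply, LinearMap.coe_mk, AddHom.coe_mk, Prod.mk.injEq, Fin.mk.injEq]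
    by_cases hik : i = k
    · subst hik
      simp [h]
    · simp [hik]

theorem homZero_string (M : BarbellRep) (hM : Function.Injective M.fc) (n : ℕ) :
    HomZero (Mstring n) M := by
  intro g1 g2 ha hb hc
  change ((Fin (n + 1) × Bool) → ℂ) →ₗ[ℂ] M.V1 at g1
  change ((Fin (n + 1) × Bool) → ℂ) →ₗ[ℂ] M.V2 at g2
  change ∀ x, g1 (strFa n x) = M.fa (g1 x) at ha
  change ∀ x, g2 (strFa n x) = M.fb (g2 x) at hb
  change ∀ x, g2 (strFc n x) = M.fc (g1 x) at hc
  have step : ∀ k : Fin (n + 1), g1 (Pi.single (k, false) 1) = 0 →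
      g1 (Pi.single (k, true) 1) = 0 ∧ g2 (Pi.single (k, false) 1) = 0 ∧
        g2 (Pi.single (k, true) 1) = 0 := by
    intro k h0
    have h1 : g1 (Pi.single (k, true) 1) = 0 := by
      rw [← strFa_single, ha, h0, map_zero]
    have h2 : g2 (Pi.single (k, false) 1) = 0 := by
      rw [← strFc_single_true, hc, h1, map_zero]
    have h3 : g2 (Pi.single (k, true) 1) = 0 := by
      rw [← strFa_single, hb, h2, map_zero]
    exact ⟨h1, h2, h3⟩
  have key : ∀ (k : ℕ) (hk : k < n + 1), g1 (Pi.single (⟨k, hk⟩, false) 1) = 0 := by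
    intro k
    induction k with
    | zero =>
      intro hk
      apply hM
      rw [← hc, strFc_single_zero, map_zero, map_zero]
    | succ k ih =>
      intro hk
      have hk' : k < n + 1 := by omega
      apply hM
      rw [← hc, strFc_single_succ n k hk hk', (step _ (ih hk')).2.2, map_zero]
  have e1 : g1 = 0 := by
    apply LinearMap.pi_ext'
    rintro ⟨⟨k, hk⟩, b⟩
    apply LinearMap.ext_ring
    cases b
    · simpa using key k hk
    · simpa using (step _ (key k hk)).1
  have e2 : g2 = 0 := by
    apply LinearMap.pi_ext'
    rintro ⟨⟨k, hk⟩, b⟩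
    apply LinearMap.ext_ring
    cases b
    · simpa using (step _ (key k hk)).2.1
    · simpa using (step _ (key k hk)).2.2
  exact ⟨fun x => LinearMap.congr_fun e1 x, fun y => LinearMap.congr_fun e2 y⟩

theorem homZero_dsum (A B M : BarbellRep) (hA : HomZero A M) (hB : HomZero B M) :
    HomZero (dsum A B) M := by
  intro g1 g2 ha hb hc
  change (A.V1 × B.V1) →ₗ[ℂ] M.V1 at g1
  change (A.V2 × B.V2) →ₗ[ℂ] M.V2 at g2
  change ∀ x : A.V1 × B.V1, g1 (A.fa x.1, B.fa x.2) = M.fa (g1 x) at ha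
  change ∀ x : A.V2 × B.V2, g2 (A.fb x.1, B.fb x.2) = M.fb (g2 x) at hb
  change ∀ x : A.V1 × B.V1, g2 (A.fc x.1, B.fc x.2) = M.fc (g1 x) at hc
  obtain ⟨a1, a2⟩ := hA (g1 ∘ₗ LinearMap.inl ℂ _ _) (g2 ∘ₗ LinearMap.inl ℂ _ _)
    (fun x => by simpa using ha (x, 0)) (fun x => by simpa using hb (x, 0))
    (fun x => by simpa using hc (x, 0))
  obtain ⟨b1, b2⟩ := hB (g1 ∘ₗ LinearMap.inr ℂ _ _) (g2 ∘ₗ LinearMap.inr ℂ _ _)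
    (fun x => by simpa using ha (0, x)) (fun x => by simpa using hb (0, x))
    (fun x => by simpa using hc (0, x))
  constructor
  · rintro ⟨x, y⟩
    have h1 : g1 (x, 0) = 0 := a1 x
    have h2 : g1 (0, y) = 0 := b1 y
    have : ((x, y) : A.V1 × B.V1) = (x, 0) + (0, y) := by simp
    exact (congrArg g1 this).trans (by rw [map_add, h1, h2, add_zero])
  · rintro ⟨x, y⟩
    have h1 : g2 (x, 0) = 0 := a2 x
    have h2 : g2 (0, y) = 0 := b2 y
    have : ((x, y) : A.V2 × B.V2) = (x, 0) + (0, y) := by simp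
    exact (congrArg g2 this).trans (by rw [map_add, h1, h2, add_zero])

theorem homZero_list (M : BarbellRep) (hM : Function.Injective M.fc) (l : List ℕ) :
    HomZero (dsumList (l.map Mstring)) M := by
  induction l with
  | nil =>
    intro g1 g2 _ _ _
    change (Fin 0 → ℂ) →ₗ[ℂ] M.V1 at g1
    change (Fin 0 → ℂ) →ₗ[ℂ] M.V2 at g2
    refine ⟨fun x => ?_, fun x => ?_⟩
    · change Fin 0 → ℂ at x
      rw [Subsingleton.elim x 0]; exact map_zero g1
    · change Fin 0 → ℂ at x
      rw [Subsingleton.elim x 0]; exact map_zero g2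
  | cons n l ih => exact homZero_dsum _ _ _ (homZero_string M hM n) ih

section lin
variable {A B A' B' : Type} [AddCommGroup A] [AddCommGroup B] [AddCommGroup A'] [AddCommGroup B']
  [Module ℂ A] [Module ℂ B] [Module ℂ A'] [Module ℂ B']

/-- The first diagonal block of a block triangular equivalence. -/
def blockFst (e : (A × B) ≃ₗ[ℂ] (A' × B')) (h : ∀ y, (e (0, y)).1 = 0)
    (h' : ∀ y, (e.symm (0, y)).1 = 0) : A ≃ₗ[ℂ] A' :=
  LinearEquiv.ofLinear
    (LinearMap.fst ℂ A' B' ∘ₗ e.toLinearMap ∘ₗ LinearMap.inl ℂ A B)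
    (LinearMap.fst ℂ A B ∘ₗ e.symm.toLinearMap ∘ₗ LinearMap.inl ℂ A' B')
    (by
      ext x
      have h1 : e.symm (x, 0) = ((e.symm (x, 0)).1, 0) + (0, (e.symm (x, 0)).2) := by simp
      have h2 := congrArg (fun z => (e z).1) h1
      simp only [map_add, LinearEquiv.apply_symm_apply, Prod.fst_add, h, add_zero] at h2
      simpa using h2.symm)
    (by
      ext x
      have h1 : e (x, 0) = ((e (x, 0)).1, 0) + (0, (e (x, 0)).2) := by simp
      have h2 := congrArg (fun z => (e.symm z).1) h1
      simp only [map_add, LinearEquiv.symm_apply_apply, Prod.fst_add, h', add_zero] at h2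
      simpa using h2.symm)

/-- The second diagonal block of a block triangular equivalence. -/
def blockSnd (e : (A × B) ≃ₗ[ℂ] (A' × B')) (h : ∀ y, (e (0, y)).1 = 0)
    (h' : ∀ y, (e.symm (0, y)).1 = 0) : B ≃ₗ[ℂ] B' :=
  LinearEquiv.ofLinear
    (LinearMap.snd ℂ A' B' ∘ₗ e.toLinearMap ∘ₗ LinearMap.inr ℂ A B)
    (LinearMap.snd ℂ A B ∘ₗ e.symm.toLinearMap ∘ₗ LinearMap.inr ℂ A' B')
    (by
      ext x
      have h1 : (0, (e.symm (0, x)).2) = e.symm (0, x) := Prod.ext (h' x).symm rfl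
      simp [h1])
    (by
      ext x
      have h1 : (0, (e (0, x)).2) = e (0, x) := Prod.ext (h x).symm rfl
      simp [h1])

theorem blockFst_apply (e : (A × B) ≃ₗ[ℂ] (A' × B')) (h h') (z : A × B) :
    blockFst e h h' z.1 = (e z).1 := by
  have h1 : z = (z.1, 0) + (0, z.2) := by simp
  have h2 := congrArg (fun z => (e z).1) h1
  simp only [map_add, Prod.fst_add, h, add_zero] at h2
  exact h2.symm

theorem blockSnd_apply (e : (A × B) ≃ₗ[ℂ] (A' × B')) (h h') (x : B) :
    blockSnd e h h' x = (e (0, x)).2 := rfl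

end lin

theorem iso_blocks (M M' N N' : BarbellRep) (hN : HomZero N M') (hN' : HomZero N' M)
    (h : RepIso (dsum M N) (dsum M' N')) : RepIso M M' ∧ RepIso N N' := by
  obtain ⟨e1, e2, ha, hb, hc⟩ := h
  change (M.V1 × N.V1) ≃ₗ[ℂ] (M'.V1 × N'.V1) at e1
  change (M.V2 × N.V2) ≃ₗ[ℂ] (M'.V2 × N'.V2) at e2
  change ∀ x : M.V1 × N.V1, e1 (M.fa x.1, N.fa x.2) = (M'.fa (e1 x).1, N'.fa (e1 x).2) at ha
  change ∀ x : M.V2 × N.V2, e2 (M.fb x.1, N.fb x.2) = (M'.fb (e2 x).1, N'.fb (e2 x).2) at hb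
  change ∀ x : M.V1 × N.V1, e2 (M.fc x.1, N.fc x.2) = (M'.fc (e1 x).1, N'.fc (e1 x).2) at hc
  have ha' : ∀ x : M'.V1 × N'.V1, e1.symm (M'.fa x.1, N'.fa x.2) =
      (M.fa (e1.symm x).1, N.fa (e1.symm x).2) := fun x => by
    rw [LinearEquiv.symm_apply_eq, ha, LinearEquiv.apply_symm_apply]
  have hb' : ∀ x : M'.V2 × N'.V2, e2.symm (M'.fb x.1, N'.fb x.2) =
      (M.fb (e2.symm x).1, N.fb (e2.symm x).2) := fun x => by
    rw [LinearEquiv.symm_apply_eq, hb, LinearEquiv.apply_symm_apply]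
  have hc' : ∀ x : M'.V1 × N'.V1, e2.symm (M'.fc x.1, N'.fc x.2) =
      (M.fc (e1.symm x).1, N.fc (e1.symm x).2) := fun x => by
    rw [LinearEquiv.symm_apply_eq, hc, LinearEquiv.apply_symm_apply]
  obtain ⟨z1, z2⟩ := hN
    (LinearMap.fst ℂ _ _ ∘ₗ e1.toLinearMap ∘ₗ LinearMap.inr ℂ _ _)
    (LinearMap.fst ℂ _ _ ∘ₗ e2.toLinearMap ∘ₗ LinearMap.inr ℂ _ _)
    (fun x => by simpa using congrArg Prod.fst (ha (0, x)))
    (fun x => by simpa using congrArg Prod.fst (hb (0, x)))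
    (fun x => by simpa using congrArg Prod.fst (hc (0, x)))
  obtain ⟨w1, w2⟩ := hN'
    (LinearMap.fst ℂ _ _ ∘ₗ e1.symm.toLinearMap ∘ₗ LinearMap.inr ℂ _ _)
    (LinearMap.fst ℂ _ _ ∘ₗ e2.symm.toLinearMap ∘ₗ LinearMap.inr ℂ _ _)
    (fun x => by simpa using congrArg Prod.fst (ha' (0, x)))
    (fun x => by simpa using congrArg Prod.fst (hb' (0, x)))
    (fun x => by simpa using congrArg Prod.fst (hc' (0, x)))
  refine ⟨⟨blockFst e1 z1 w1, blockFst e2 z2 w2, fun x => ?_, fun x => ?_, fun x => ?_⟩,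
    ⟨blockSnd e1 z1 w1, blockSnd e2 z2 w2, fun x => ?_, fun x => ?_, fun x => ?_⟩⟩
  · exact (blockFst_apply e1 z1 w1 (M.fa x, N.fa 0)).trans ((congrArg Prod.fst (ha (x, 0))).trans
      (congrArg M'.fa (blockFst_apply e1 z1 w1 (x, 0)).symm))
  · exact (blockFst_apply e2 z2 w2 (M.fb x, N.fb 0)).trans ((congrArg Prod.fst (hb (x, 0))).trans
      (congrArg M'.fb (blockFst_apply e2 z2 w2 (x, 0)).symm))
  · exact (blockFst_apply e2 z2 w2 (M.fc x, N.fc 0)).trans ((congrArg Prod.fst (hc (x, 0))).trans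
      (congrArg M'.fc (blockFst_apply e1 z1 w1 (x, 0)).symm))
  · have t := congrArg Prod.snd (ha (0, x))
    simp only [map_zero] at t
    exact t
  · have t := congrArg Prod.snd (hb (0, x))
    simp only [map_zero] at t
    exact t
  · have t := congrArg Prod.snd (hc (0, x))
    simp only [map_zero] at t
    exact t

/-- Let `M` and `M'` be representations of the barbell quiver with
potential whose maps `f_c` are isomorphisms, and let `N = ⊕_{n ∈ l} M(acb(c⁻¹acb)ⁿ)` and
`N' = ⊕_{n ∈ l'} M(acb(c⁻¹acb)ⁿ)` be finite direct sums of the string modules.  If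
`M ⊕ N ≅ M' ⊕ N'` then `M ≅ M'` and `N ≅ N'`: the decomposition is unique up to
isomorphism. -/
theorem barbell_decomposition_unique
    (M M' : BarbellRep)
    (hM : Function.Bijective M.fc) (hM' : Function.Bijective M'.fc)
    (l l' : List ℕ)
    (h : RepIso (dsum M (dsumList (l.map Mstring))) (dsum M' (dsumList (l'.map Mstring)))) :
    RepIso M M' ∧ RepIso (dsumList (l.map Mstring)) (dsumList (l'.map Mstring)) := iso_blocks _ _ _ _ (homZero_list M' hM'.injective l) (homZero_list M hM.injective l') h
end
end

section
/- Fix a central charge Z : ℤ² → ℂ with φ(0,1) < φ(1,0), and set θ := φ(1,1). Then the string module M(acb) is stable, and every stable representation of the barbell quiver with potential of phase θ whose map f_c is not an isomorphism is isomorphic to M(acb). In particular, for every n ≥ 1 the string module M(acb(c⁻¹acb)ⁿ) is semistable of phase θ but not stable. -/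
/-!
# Statement 10

Work over `ℂ`.  The barbell quiver has vertices `1` and `2`, a loop `a` at vertex `1`, a loop
`b` at vertex `2`, and an arrow `c : 1 → 2`; its potential is `W = a³ + b³`, whose Jacobian
relations are `a² = 0` and `b² = 0`.  Fix a central charge `Z : ℤ² → ℂ` with
`φ(0,1) < φ(1,0)`, and set `θ := φ(1,1)`.  Then the string module `M(acb)` is stable, and
every stable representation of the barbell quiver with potential of phase `θ` whose map
`f_c` is not an isomorphism is isomorphic to `M(acb)`.  In particular, for every `n ≥ 1` the
string module `M(acb(c⁻¹acb)ⁿ)` is semistable of phase `θ` but not stable.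
-/

noncomputable section
open Module

/-- The set `ℍ = {r·exp(iπφ) : r > 0, 0 < φ ≤ 1} ⊆ ℂ`. -/
def UpperH : Set ℂ :=
  {z | ∃ r φ : ℝ, 0 < r ∧ 0 < φ ∧ φ ≤ 1 ∧ z = (r : ℂ) * Complex.exp ((Real.pi * φ : ℝ) * Complex.I)}

/-- The phase `φ ∈ (0, 1]` of a complex number `z ∈ ℍ`: if `z = r·exp(iπφ)` with `r > 0` and
`0 < φ ≤ 1`, then `Complex.arg z = π·φ`, so that `phase z = φ` is the unique `φ ∈ (0,1]` with
`z ∈ ℝ_{>0}·exp(iπφ)`. -/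
def phase (z : ℂ) : ℝ := Complex.arg z / Real.pi

/-- The value of the central charge on a dimension vector in `ℕ²`. -/
def chargeOf (Z : ℤ × ℤ →+ ℂ) (d : ℕ × ℕ) : ℂ := Z ((d.1 : ℤ), (d.2 : ℤ))

/-- A nonzero representation `M` is semistable if `φ(dim L) ≤ φ(dim M)` for every nonzero
proper subrepresentation `L` of `M`. -/
def IsSemistable (Z : ℤ × ℤ →+ ℂ) (M : BarbellRep) : Prop :=
  M.dimVec ≠ (0, 0) ∧
    ∀ L : M.Sub, L.Nonzero → L.Proper →
      phase (chargeOf Z L.dimVec) ≤ phase (chargeOf Z M.dimVec)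

/-- A nonzero representation `M` is stable if `φ(dim L) < φ(dim M)` for every nonzero
proper subrepresentation `L` of `M`. -/
def IsStable (Z : ℤ × ℤ →+ ℂ) (M : BarbellRep) : Prop :=
  M.dimVec ≠ (0, 0) ∧
    ∀ L : M.Sub, L.Nonzero → L.Proper →
      phase (chargeOf Z L.dimVec) < phase (chargeOf Z M.dimVec)

theorem aux_arg_pos_iff (z : ℂ) : 0 < Complex.arg z ↔ (0 < z.im ∨ (z.im = 0 ∧ z.re < 0)) := by
  constructor
  · intro h
    have h0 : 0 ≤ z.im := Complex.arg_nonneg_iff.1 h.le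
    rcases h0.lt_or_eq with h1 | h1
    · exact Or.inl h1
    · right
      refine ⟨h1.symm, ?_⟩
      by_contra hre
      push Not at hre
      have := Complex.arg_eq_zero_iff.2 ⟨hre, h1.symm⟩
      linarith
  · intro h
    have h0 : 0 ≤ z.arg := by
      rw [Complex.arg_nonneg_iff]
      rcases h with h | h
      · exact h.le
      · exact h.1.ge
    refine lt_of_le_of_ne h0 fun h1 => ?_
    have h2 := Complex.arg_eq_zero_iff.1 h1.symm
    rcases h with h | h
    · linarith [h2.2]
    · linarith [h2.1]

theorem aux_upperH {z : ℂ} (h : z ∈ UpperH) : 0 < Complex.arg z := by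
  obtain ⟨r, φ, hr, h0, h1, rfl⟩ := h
  have hpi := Real.pi_pos
  rw [Complex.arg_real_mul _ hr, Complex.exp_mul_I,
    Complex.arg_cos_add_sin_mul_I ⟨by nlinarith, by nlinarith⟩]
  positivity

theorem aux_cross_eq (z w : ℂ) : z.re * w.im - z.im * w.re =
    ‖z‖ * ‖w‖ * Real.sin (w.arg - z.arg) := by
  rw [Real.sin_sub]
  have h1 := Complex.norm_mul_cos_arg z
  have h2 := Complex.norm_mul_sin_arg z
  have h3 := Complex.norm_mul_cos_arg w
  have h4 := Complex.norm_mul_sin_arg w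
  rw [← h1, ← h2, ← h3, ← h4]
  ring

theorem aux_arg_lt {z w : ℂ} (hz : 0 < z.arg) (hw : 0 < w.arg) :
    z.arg < w.arg ↔ 0 < z.re * w.im - z.im * w.re := by
  have hz0 : z ≠ 0 := by rintro rfl; simp at hz
  have hw0 : w ≠ 0 := by rintro rfl; simp at hw
  have hzp := Complex.arg_le_pi z
  have hwp := Complex.arg_le_pi w
  have hn : 0 < ‖z‖ * ‖w‖ := mul_pos (norm_pos_iff.2 hz0) (norm_pos_iff.2 hw0)
  rw [aux_cross_eq]
  constructor
  · intro h
    exact mul_pos hn (Real.sin_pos_of_pos_of_lt_pi (by linarith) (by linarith))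
  · intro h
    by_contra hle
    push Not at hle
    have : Real.sin (w.arg - z.arg) ≤ 0 :=
      Real.sin_nonpos_of_nonpos_of_neg_pi_le (by linarith) (by linarith)
    nlinarith

theorem aux_charge (Z : ℤ × ℤ →+ ℂ) (d : ℕ × ℕ) :
    chargeOf Z d = (d.1 : ℂ) * Z (1, 0) + (d.2 : ℂ) * Z (0, 1) := by
  have : (((d.1 : ℤ), (d.2 : ℤ)) : ℤ × ℤ) = d.1 • ((1, 0) : ℤ × ℤ) + d.2 • ((0, 1) : ℤ × ℤ) := by
    ext <;> simp
  rw [chargeOf, this, map_add, map_nsmul, map_nsmul]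
  simp

theorem aux_charge_pos (Z : ℤ × ℤ →+ ℂ)
    (h1 : Z (1, 0) ∈ UpperH) (h2 : Z (0, 1) ∈ UpperH) (d : ℕ × ℕ) (hd : d ≠ (0, 0)) :
    0 < (chargeOf Z d).arg := by
  have h1 := (aux_arg_pos_iff _).1 (aux_upperH h1)
  have h2 := (aux_arg_pos_iff _).1 (aux_upperH h2)
  rw [aux_arg_pos_iff, aux_charge]
  obtain ⟨m, n⟩ := d
  simp only [Complex.add_im, Complex.add_re, Complex.mul_re, Complex.mul_im, Complex.natCast_re,
    Complex.natCast_im, zero_mul, sub_zero, add_zero]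
  have hm : (0 : ℝ) ≤ m := m.cast_nonneg
  have hn : (0 : ℝ) ≤ n := n.cast_nonneg
  rcases Nat.eq_zero_or_pos m with rfl | hm'
  · have hn' : 0 < n := by
      rcases Nat.eq_zero_or_pos n with rfl | h
      · exact absurd rfl hd
      · exact h
    have hn' : (0 : ℝ) < n := by exact_mod_cast hn'
    rcases h2 with h2 | ⟨h2, h2'⟩
    · left; simp; positivity
    · right; simp [h2]; nlinarith
  · have hm' : (0 : ℝ) < m := by exact_mod_cast hm'
    rcases h1 with h1 | ⟨h1, h1'⟩
    · left
      have : 0 ≤ (Z (0, 1)).im := by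
        rcases h2 with h | h
        · exact h.le
        · exact h.1.ge
      positivity
    · rw [h1]
      rcases h2 with h2 | ⟨h2, h2'⟩
      · rcases hn.lt_or_eq with h | h
        · left; simp; positivity
        · right; rw [← h]; simp; nlinarith
      · right; rw [h2]; simp; nlinarith

theorem aux_phase_lt (z w : ℂ) : phase z < phase w ↔ z.arg < w.arg :=
  div_lt_div_iff_of_pos_right Real.pi_pos

theorem aux_lt (Z : ℤ × ℤ →+ ℂ)
    (h1 : Z (1, 0) ∈ UpperH) (h2 : Z (0, 1) ∈ UpperH)
    (hph : phase (Z (0, 1)) < phase (Z (1, 0))) (d e : ℕ × ℕ) (hd : d ≠ (0, 0))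
    (he : e ≠ (0, 0)) :
    phase (chargeOf Z d) < phase (chargeOf Z e) ↔ (d.1 : ℝ) * e.2 < d.2 * e.1 := by
  rw [aux_phase_lt, aux_arg_lt (aux_charge_pos Z h1 h2 d hd) (aux_charge_pos Z h1 h2 e he)]
  rw [aux_phase_lt, aux_arg_lt (aux_upperH h2) (aux_upperH h1)] at hph
  rw [aux_charge, aux_charge]
  simp only [Complex.add_im, Complex.add_re, Complex.mul_re, Complex.mul_im, Complex.natCast_re,
    Complex.natCast_im, zero_mul, sub_zero, add_zero]
  generalize (Z (0, 1)).re = p at *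
  generalize (Z (0, 1)).im = q at *
  generalize (Z (1, 0)).re = r at *
  generalize (Z (1, 0)).im = s at *
  have : (d.1 * r + d.2 * p) * (e.1 * s + e.2 * q) - (d.1 * s + d.2 * q) * (e.1 * r + e.2 * p)
    = (p * s - q * r) * ((d.2 : ℝ) * e.1 - d.1 * e.2) := by ring
  rw [this, mul_pos_iff_of_pos_left hph, sub_pos]

theorem aux_lt_sq (Z : ℤ × ℤ →+ ℂ)
    (h1 : Z (1, 0) ∈ UpperH) (h2 : Z (0, 1) ∈ UpperH)
    (hph : phase (Z (0, 1)) < phase (Z (1, 0))) (d : ℕ × ℕ) (hd : d ≠ (0, 0)) (k : ℕ)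
    (hk : 0 < k) :
    (phase (chargeOf Z d) < phase (chargeOf Z (k, k)) ↔ d.1 < d.2) ∧
    (phase (chargeOf Z (k, k)) < phase (chargeOf Z d) ↔ d.2 < d.1) := by
  have hk0 : ((k, k) : ℕ × ℕ) ≠ (0, 0) := by
    intro h; simp at h; omega
  have hk' : (0 : ℝ) < k := by exact_mod_cast hk
  rw [aux_lt Z h1 h2 hph _ _ hd hk0, aux_lt Z h1 h2 hph _ _ hk0 hd]
  constructor
  · rw [mul_lt_mul_iff_left₀ hk']; exact Nat.cast_lt
  · rw [mul_lt_mul_iff_right₀ hk']; exact Nat.cast_lt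

theorem aux_one (Z : ℤ × ℤ →+ ℂ) : Z (1, 1) = chargeOf Z (1, 1) := by simp [chargeOf]

theorem aux_dim_nonzero {M : BarbellRep} (L : M.Sub) (h : L.Nonzero) : L.dimVec ≠ (0, 0) := by
  intro h0
  simp only [BarbellRep.Sub.dimVec, Prod.mk.injEq, Submodule.finrank_eq_zero] at h0
  rcases h with h | h
  · exact h h0.1
  · exact h h0.2

theorem aux_Mstring_dim (n : ℕ) : (Mstring n).dimVec = (2 * (n + 1), 2 * (n + 1)) := by
  have : finrank ℂ ((Fin (n + 1) × Bool) → ℂ) = 2 * (n + 1) := by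
    simp [mul_comm]
  exact Prod.ext this this

theorem aux_id (n : ℕ) (v : (Fin (n + 1) × Bool) → ℂ) :
    strFc n (strFa n v) + strFa n (strFc n v) = v := by
  funext ⟨p, q⟩
  cases q <;> simp [strFc, strFa]

theorem aux_sub_le (n : ℕ) (S1 S2 : Submodule ℂ ((Fin (n + 1) × Bool) → ℂ))
    (ha : ∀ x ∈ S1, strFa n x ∈ S1) (hb : ∀ x ∈ S2, strFa n x ∈ S2)
    (hc : ∀ x ∈ S1, strFc n x ∈ S2) : S1 ≤ S2 := by
  intro v hv
  rw [← aux_id n v]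
  exact S2.add_mem (hc _ (ha _ hv)) (hb _ (hc _ hv))

theorem aux_sub_zero (S : Submodule ℂ ((Fin (0 + 1) × Bool) → ℂ))
    (ha : ∀ x ∈ S, strFa 0 x ∈ S) (hc : ∀ x ∈ S, strFc 0 x ∈ S) (h0 : S ≠ ⊥) : S = ⊤ := by
  obtain ⟨v, hv, hv0⟩ := Submodule.exists_mem_ne_zero_of_ne_bot h0
  rw [eq_top_iff]
  have key : ∃ u ∈ S, u (0, false) = 1 ∧ u (0, true) = 0 := by
    by_cases h : v (0, true) = 0
    · have hf : v (0, false) ≠ 0 := by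
        intro hf
        apply hv0
        funext ⟨p, q⟩
        have : p = 0 := Fin.fin_one_eq_zero p
        subst this
        cases q <;> simp [h, hf]
      exact ⟨(v (0, false))⁻¹ • v, S.smul_mem _ hv, by simp [hf], by simp [h]⟩
    · refine ⟨(v (0, true))⁻¹ • strFc 0 v, S.smul_mem _ (hc _ hv), ?_, ?_⟩
      · simp [strFc, h]
      · simp [strFc]
  obtain ⟨u, hu, hu1, hu2⟩ := key
  intro w _
  have : w = w (0, false) • u + w (0, true) • strFa 0 u := by
    funext ⟨p, q⟩
    have : p = 0 := Fin.fin_one_eq_zero p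
    subst this
    cases q <;> simp [hu1, hu2, strFa]
  rw [this]
  exact S.add_mem (S.smul_mem _ hu) (S.smul_mem _ (ha _ hu))

theorem aux_stable_zero (Z : ℤ × ℤ →+ ℂ)
    (h1 : Z (1, 0) ∈ UpperH) (h2 : Z (0, 1) ∈ UpperH)
    (hph : phase (Z (0, 1)) < phase (Z (1, 0))) : IsStable Z (Mstring 0) := by
  refine ⟨by rw [aux_Mstring_dim]; simp, fun L hL hP => ?_⟩
  rw [aux_Mstring_dim, (aux_lt_sq Z h1 h2 hph _ (aux_dim_nonzero L hL) _ (by omega)).1]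
  obtain ⟨S1, S2, ha, hb, hc⟩ := L
  change Submodule ℂ ((Fin (0 + 1) × Bool) → ℂ) at S1 S2
  have hle : S1 ≤ S2 := aux_sub_le 0 S1 S2 ha hb hc
  suffices hne : S1 ≠ S2 from
    Submodule.finrank_lt_finrank_of_lt (K := ℂ) (V := (Fin (0 + 1) × Bool) → ℂ)
      (lt_of_le_of_ne hle hne)
  rintro rfl
  have hb0 : S1 ≠ ⊥ := by rcases hL with h | h <;> exact h
  have := aux_sub_zero S1 ha hc hb0
  rcases hP with h | h <;> exact h this

theorem aux_semi (Z : ℤ × ℤ →+ ℂ)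
    (h1 : Z (1, 0) ∈ UpperH) (h2 : Z (0, 1) ∈ UpperH)
    (hph : phase (Z (0, 1)) < phase (Z (1, 0))) (n : ℕ) : IsSemistable Z (Mstring n) := by
  refine ⟨by rw [aux_Mstring_dim]; simp, fun L hL hP => ?_⟩
  rw [← not_lt, aux_Mstring_dim, (aux_lt_sq Z h1 h2 hph _ (aux_dim_nonzero L hL) _ (by omega)).2,
    not_lt]
  obtain ⟨S1, S2, ha, hb, hc⟩ := L
  change Submodule ℂ ((Fin (n + 1) × Bool) → ℂ) at S1 S2
  have hle : S1 ≤ S2 := aux_sub_le n S1 S2 ha hb hc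
  exact Submodule.finrank_mono (R := ℂ) (M := (Fin (n + 1) × Bool) → ℂ) hle

/-- vectors supported on the indices `(0, _)` -/
def auxF (n : ℕ) : Submodule ℂ ((Fin (n + 1) × Bool) → ℂ) where
  carrier := {v | ∀ p q, p ≠ 0 → v (p, q) = 0}
  zero_mem' := by intro p q _; rfl
  add_mem' := by
    intro u v hu hv p q h
    simp [hu p q h, hv p q h]
  smul_mem' := by
    intro c v hv p q h
    simp [hv p q h]

/-- the subrepresentation `M(acb)` of the string module -/
def auxSub (n : ℕ) : (Mstring n).Sub where
  S1 := auxF n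
  S2 := auxF n
  mapsto_a := by
    intro x hx p q h
    change strFa n x (p, q) = 0
    have hf := hx p false h
    cases q <;> simp [strFa, hf]
  mapsto_b := by
    intro x hx p q h
    change strFa n x (p, q) = 0
    have hf := hx p false h
    cases q <;> simp [strFa, hf]
  mapsto_c := by
    intro x hx p q h
    change strFc n x (p, q) = 0
    cases q
    · exact hx p true h
    · simp only [strFc, LinearMap.coe_mk, AddHom.coe_mk, if_true]
      split
      · exact hx _ _ (fun h0 => absurd (congrArg Fin.val h0) (Nat.succ_ne_zero _))
      · rfl

theorem aux_not_stable (Z : ℤ × ℤ →+ ℂ)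
    (h1 : Z (1, 0) ∈ UpperH) (h2 : Z (0, 1) ∈ UpperH)
    (hph : phase (Z (0, 1)) < phase (Z (1, 0))) (n : ℕ) (hn : 1 ≤ n) :
    ¬ IsStable Z (Mstring n) := by
  rintro ⟨-, h⟩
  have hN : auxF n ≠ ⊥ := by
    intro hb
    have hm : (fun p => if p.1 = 0 then 1 else 0 : (Fin (n + 1) × Bool) → ℂ) ∈ auxF n := by
      intro p q hp
      exact if_neg hp
    rw [hb, Submodule.mem_bot] at hm
    have := congrFun hm (0, false)
    simp at this
  have hT : auxF n ≠ ⊤ := by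
    intro ht
    have hm : (fun _ => 1 : (Fin (n + 1) × Bool) → ℂ) ∈ auxF n := by rw [ht]; trivial
    have := hm ⟨1, by omega⟩ false (by simp [Fin.ext_iff])
    exact one_ne_zero this
  have := h (auxSub n) (Or.inl hN) (Or.inl hT)
  rw [aux_Mstring_dim, (aux_lt_sq Z h1 h2 hph _ (aux_dim_nonzero (auxSub n) (Or.inl hN)) _
    (by omega)).1] at this
  exact lt_irrefl _ this

theorem aux_span_pair {V : Type} [AddCommGroup V] [Module ℂ V] (f : V →ₗ[ℂ] V)
    (hf : f ∘ₗ f = 0) (x : V) : ∀ y ∈ Submodule.span ℂ {x, f x}, f y ∈ Submodule.span ℂ {x, f x} := by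
  intro y hy
  obtain ⟨s, t, rfl⟩ := Submodule.mem_span_pair.1 hy
  have : f (f x) = 0 := LinearMap.congr_fun hf x
  rw [map_add, map_smul, map_smul, this, smul_zero, add_zero]
  exact Submodule.smul_mem _ _ (Submodule.subset_span (by simp))

theorem aux_indep {V : Type} [AddCommGroup V] [Module ℂ V] (f : V →ₗ[ℂ] V)
    (hf : f ∘ₗ f = 0) (x : V) (h : f x ≠ 0) : LinearIndependent ℂ ![x, f x] := by
  have h2 : f (f x) = 0 := LinearMap.congr_fun hf x
  rw [LinearIndependent.pair_iff]
  intro s t hst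
  have h3 := congrArg f hst
  simp only [map_add, map_smul, h2, smul_zero, add_zero, map_zero] at h3
  have hs : s = 0 := (smul_eq_zero.1 h3).resolve_right h
  subst hs
  simp only [zero_smul, zero_add] at hst
  exact ⟨rfl, (smul_eq_zero.1 hst).resolve_right h⟩

/-- the coordinate vector in the model -/
def auxVec (s t : ℂ) : (Fin (0 + 1) × Bool) → ℂ := fun p => if p.2 then t else s

theorem aux_equiv {V : Type} [AddCommGroup V] [Module ℂ V] (x y : V)
    (hi : LinearIndependent ℂ ![x, y]) (hs : ∀ v : V, v ∈ Submodule.span ℂ {x, y}) :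
    ∃ e : V ≃ₗ[ℂ] ((Fin (0 + 1) × Bool) → ℂ), ∀ s t : ℂ, e (s • x + t • y) = auxVec s t := by
  let g : ((Fin (0 + 1) × Bool) → ℂ) →ₗ[ℂ] V :=
    { toFun := fun v => v (0, false) • x + v (0, true) • y
      map_add' := by intro u v; simp only [Pi.add_apply, add_smul]; abel
      map_smul' := by
        intro c v
        simp only [Pi.smul_apply, smul_eq_mul, mul_smul, smul_add, RingHom.id_apply] }
  have hg : ∀ s t : ℂ, g (auxVec s t) = s • x + t • y := by
    intro s t
    simp [g, auxVec]
  have hinj : Function.Injective g := by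
    rw [← LinearMap.ker_eq_bot, LinearMap.ker_eq_bot']
    intro v hv
    have := LinearIndependent.pair_iff.1 hi _ _ hv
    funext ⟨p, q⟩
    have hp : p = 0 := Fin.fin_one_eq_zero p
    subst hp
    cases q
    · exact this.1
    · exact this.2
  have hsurj : Function.Surjective g := by
    intro v
    obtain ⟨s, t, h⟩ := Submodule.mem_span_pair.1 (hs v)
    exact ⟨auxVec s t, by rw [hg, h]⟩
  have hbij : Function.Bijective g := ⟨hinj, hsurj⟩
  refine ⟨(LinearEquiv.ofBijective g hbij).symm, fun s t => ?_⟩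
  rw [LinearEquiv.symm_apply_eq, LinearEquiv.ofBijective_apply, hg]

theorem aux_fin_eq {V : Type} [AddCommGroup V] [Module ℂ V] (x y : V)
    (hi : LinearIndependent ℂ ![x, y]) : finrank ℂ (Submodule.span ℂ {x, y}) = 2 := by
  have := finrank_span_eq_card hi
  rw [Matrix.range_cons_cons_empty] at this
  simpa using this

theorem aux_fin_le {V : Type} [AddCommGroup V] [Module ℂ V] (x y : V) :
    finrank ℂ (Submodule.span ℂ {x, y}) ≤ 2 := by
  have := finrank_range_le_card (R := ℂ) ![x, y]
  rw [Matrix.range_cons_cons_empty] at this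
  simpa [Set.finrank] using this

theorem aux_fin_one {V : Type} [AddCommGroup V] [Module ℂ V] (x y : V) (hy : y = 0) :
    finrank ℂ (Submodule.span ℂ {x, y}) ≤ 1 := by
  subst hy
  rw [Set.pair_comm, Submodule.span_insert_zero]
  simpa using finrank_span_le_card (R := ℂ) ({x} : Set V)

theorem aux_classify (Z : ℤ × ℤ →+ ℂ)
    (h1 : Z (1, 0) ∈ UpperH) (h2 : Z (0, 1) ∈ UpperH)
    (hph : phase (Z (0, 1)) < phase (Z (1, 0))) (M : BarbellRep) (hM : IsStable Z M)
    (hθ : phase (chargeOf Z M.dimVec) = phase (Z (1, 1))) (hc : ¬ Function.Bijective M.fc) :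
    RepIso M (Mstring 0) := by
  obtain ⟨h0, hst⟩ := hM
  rw [aux_one] at hθ
  have hdim : finrank ℂ M.V1 = finrank ℂ M.V2 := by
    have h3 := aux_lt_sq Z h1 h2 hph _ h0 1 one_pos
    rw [hθ] at h3
    have h4 := h3.1.not.1 (lt_irrefl _)
    have h5 := h3.2.not.1 (lt_irrefl _)
    exact le_antisymm (not_lt.1 h5) (not_lt.1 h4)
  have hst' : ∀ L : M.Sub, L.Nonzero → finrank ℂ L.S2 ≤ finrank ℂ L.S1 → L.S1 = ⊤ ∧ L.S2 = ⊤ := by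
    intro L hL hle
    by_contra hP
    have hP' : L.Proper := by
      rw [not_and_or] at hP
      exact hP
    have := hst L hL hP'
    rw [hθ, (aux_lt_sq Z h1 h2 hph _ (aux_dim_nonzero L hL) 1 one_pos).1] at this
    exact absurd this (not_lt.2 hle)
  have hni : ¬ Function.Injective M.fc := fun hi =>
    hc ⟨hi, (LinearMap.injective_iff_surjective_of_finrank_eq_finrank hdim).1 hi⟩
  obtain ⟨x, hx, hx0⟩ : ∃ x, M.fc x = 0 ∧ x ≠ 0 := by
    by_contra hcon
    push Not at hcon
    exact hni ((injective_iff_map_eq_zero M.fc).2 hcon)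
  let L : M.Sub :=
    { S1 := Submodule.span ℂ {x, M.fa x}
      S2 := Submodule.span ℂ {M.fc (M.fa x), M.fb (M.fc (M.fa x))}
      mapsto_a := aux_span_pair M.fa M.rel_a x
      mapsto_b := aux_span_pair M.fb M.rel_b _
      mapsto_c := by
        intro y hy
        obtain ⟨s, t, rfl⟩ := Submodule.mem_span_pair.1 hy
        rw [map_add, map_smul, map_smul, hx, smul_zero, zero_add]
        exact Submodule.smul_mem _ _ (Submodule.subset_span (by simp)) }
  have hxm : x ∈ L.S1 := Submodule.subset_span (by simp)
  have hN : L.Nonzero := Or.inl fun hb => hx0 (by rw [hb] at hxm; simpa using hxm)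
  have hax : M.fa x ≠ 0 := by
    intro hax
    have hS2 : L.S2 = ⊥ := by simp [L, hax]
    obtain ⟨hT1, hT2⟩ := hst' L hN (by rw [hS2]; simp)
    have e2 : finrank ℂ M.V2 = 0 := by
      rw [← finrank_top ℂ M.V2, ← hT2, hS2, finrank_bot]
    exact h0 (Prod.ext (hdim.trans e2) e2)
  have hi1 := aux_indep M.fa M.rel_a x hax
  have hd1 : finrank ℂ L.S1 = 2 := aux_fin_eq _ _ hi1
  have hd2 : finrank ℂ L.S2 ≤ 2 := aux_fin_le _ _
  obtain ⟨hT1, hT2⟩ := hst' L hN (by omega)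
  have hV2 : finrank ℂ M.V2 = 2 := by
    rw [← hdim, ← finrank_top ℂ M.V1, ← hT1, hd1]
  have hb : M.fb (M.fc (M.fa x)) ≠ 0 := by
    intro hb
    have h3 : finrank ℂ L.S2 ≤ 1 := aux_fin_one _ _ hb
    rw [hT2, finrank_top] at h3
    omega
  have hi2 := aux_indep M.fb M.rel_b _ hb
  have hs1 : ∀ v : M.V1, v ∈ Submodule.span ℂ {x, M.fa x} := by
    intro v
    change v ∈ L.S1
    rw [hT1]; trivial
  have hs2 : ∀ v : M.V2, v ∈ Submodule.span ℂ {M.fc (M.fa x), M.fb (M.fc (M.fa x))} := by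
    intro v
    change v ∈ L.S2
    rw [hT2]; trivial
  obtain ⟨e1, he1⟩ := aux_equiv _ _ hi1 hs1
  obtain ⟨e2, he2⟩ := aux_equiv _ _ hi2 hs2
  have ea : M.fa (M.fa x) = 0 := LinearMap.congr_fun M.rel_a x
  have eb : M.fb (M.fb (M.fc (M.fa x))) = 0 := LinearMap.congr_fun M.rel_b _
  have hva : ∀ s t : ℂ, strFa 0 (auxVec s t) = auxVec 0 s := by
    intro s t; funext ⟨p, q⟩; cases q <;> simp [strFa, auxVec]
  have hvc : ∀ s t : ℂ, strFc 0 (auxVec s t) = auxVec t 0 := by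
    intro s t; funext ⟨p, q⟩; cases q <;> simp [strFc, auxVec]
  have p1 : ∀ v, e1 (M.fa v) = strFa 0 (e1 v) := by
    intro v
    obtain ⟨s, t, rfl⟩ := Submodule.mem_span_pair.1 (hs1 v)
    rw [he1, hva, ← he1]
    simp [ea]
  have p2 : ∀ v, e2 (M.fb v) = strFa 0 (e2 v) := by
    intro v
    obtain ⟨s, t, rfl⟩ := Submodule.mem_span_pair.1 (hs2 v)
    rw [he2, hva, ← he2]
    simp [eb]
  have p3 : ∀ v, e2 (M.fc v) = strFc 0 (e1 v) := by
    intro v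
    obtain ⟨s, t, rfl⟩ := Submodule.mem_span_pair.1 (hs1 v)
    rw [he1, hvc, ← he2]
    simp [hx]
  exact ⟨e1, e2, p1, p2, p3⟩

/-- Fix a central charge `Z : ℤ² → ℂ` (values of the standard basis
vectors in `ℍ`) with `φ(0,1) < φ(1,0)`, and set `θ := φ(1,1) = phase (Z (1,1))`.  Then:
* the string module `M(acb)` (which is `Mstring 0`) is stable;
* every stable representation of phase `θ` whose map `f_c` is not an isomorphism is
  isomorphic to `M(acb)`;
* for every `n ≥ 1` the string module `M(acb(c⁻¹acb)ⁿ)` is semistable of phase `θ`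
  but not stable. -/
theorem barbell_stables_of_phase_theta
    (Z : ℤ × ℤ →+ ℂ)
    (hZ10 : Z (1, 0) ∈ UpperH) (hZ01 : Z (0, 1) ∈ UpperH)
    (hph : phase (Z (0, 1)) < phase (Z (1, 0))) :
    IsStable Z (Mstring 0) ∧
    (∀ M : BarbellRep, IsStable Z M →
      phase (chargeOf Z M.dimVec) = phase (Z (1, 1)) →
      ¬ Function.Bijective M.fc → RepIso M (Mstring 0)) ∧
    (∀ n : ℕ, 1 ≤ n →
      IsSemistable Z (Mstring n) ∧
      phase (chargeOf Z (Mstring n).dimVec) = phase (Z (1, 1)) ∧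
      ¬ IsStable Z (Mstring n)) := by
  refine ⟨aux_stable_zero Z hZ10 hZ01 hph, fun M hM hθ hc =>
    aux_classify Z hZ10 hZ01 hph M hM hθ hc, fun n hn =>
    ⟨aux_semi Z hZ10 hZ01 hph n, ?_, aux_not_stable Z hZ10 hZ01 hph n hn⟩⟩
  rw [aux_Mstring_dim, aux_one]
  have h := aux_lt_sq Z hZ10 hZ01 hph (2 * (n + 1), 2 * (n + 1)) (by simp) 1 one_pos
  exact le_antisymm (not_lt.1 (h.2.not.2 (lt_irrefl _))) (not_lt.1 (h.1.not.2 (lt_irrefl _)))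
end
end

section
/- There is a non-split short exact sequence of barbell representations 0 → M(acb) → M(acbc⁻¹acb) → M(acb) → 0, and the Yoneda extension group Ext¹(M(acb), M(acb)) (equivalence classes of short exact sequences 0 → M(acb) → E → M(acb) → 0 with the Baer-sum ℂ-vector space structure) is one-dimensional over ℂ; consequently every non-split self-extension of M(acb) has middle term isomorphic to the string module M(acbc⁻¹acb). -/
/-!
# Statement 11

Work over `ℂ`.  The barbell quiver has vertices `1` and `2`, a loop `a` at vertex `1`, a
loop `b` at vertex `2`, and an arrow `c : 1 → 2`; its potential is `W = a³ + b³`, whose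
Jacobian relations are `a² = 0` and `b² = 0`.  There is a non-split short exact sequence of
barbell representations `0 → M(acb) → M(acbc⁻¹acb) → M(acb) → 0`, and the Yoneda extension
group `Ext¹(M(acb), M(acb))` (equivalence classes of short exact sequences
`0 → M(acb) → E → M(acb) → 0` with the Baer-sum `ℂ`-vector space structure) is
one-dimensional over `ℂ`; consequently every non-split self-extension of `M(acb)` has middle
term isomorphic to the string module `M(acbc⁻¹acb)`.

Here `M(acb) = Mstring 0` and `M(acbc⁻¹acb) = Mstring 1`.  One-dimensionality of the Yoneda
`Ext¹` is expressed without constructing the Baer-sum structure: a class is nonzero iff its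
short exact sequences are non-split, and for `λ ≠ 0` the class `λ·[ξ₁]` is represented by
`(E₁, i₁ ∘ (λ⁻¹ • id), p₁)`; hence `[ξ₂] = λ·[ξ₁]` iff there is an isomorphism
`e : E₁ ≅ E₂` of representations with `e ∘ i₁ = i₂ ∘ (λ • id)` and `p₂ ∘ e = p₁`.  A vector
space is one-dimensional iff it has a nonzero vector and any two nonzero vectors are
proportional by a nonzero scalar.
-/

noncomputable section
open Module

/-- A morphism of barbell representations: a pair of linear maps commuting with the
structure maps. -/
structure BHom (M N : BarbellRep) where
  g1 : M.V1 →ₗ[ℂ] N.V1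
  g2 : M.V2 →ₗ[ℂ] N.V2
  comm_a : ∀ x, g1 (M.fa x) = N.fa (g1 x)
  comm_b : ∀ y, g2 (M.fb y) = N.fb (g2 y)
  comm_c : ∀ x, g2 (M.fc x) = N.fc (g1 x)

/-- A (componentwise) short exact sequence `0 → Y → E → X → 0` of barbell
representations. -/
structure BSES (Y X : BarbellRep) where
  E : BarbellRep
  i : BHom Y E
  p : BHom E X
  inj1 : Function.Injective i.g1
  inj2 : Function.Injective i.g2
  surj1 : Function.Surjective p.g1
  surj2 : Function.Surjective p.g2
  exact1 : LinearMap.range i.g1 = LinearMap.ker p.g1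
  exact2 : LinearMap.range i.g2 = LinearMap.ker p.g2

/-- A short exact sequence `0 → Y → E → X → 0` splits if the projection `p` admits a
section which is a morphism of representations. -/
def BSES.IsSplit {Y X : BarbellRep} (ξ : BSES Y X) : Prop :=
  ∃ s : BHom X ξ.E, (∀ x, ξ.p.g1 (s.g1 x) = x) ∧ (∀ y, ξ.p.g2 (s.g2 y) = y)

/-- `ScaledEquiv lam ξ₁ ξ₂` says that the Yoneda class of `ξ₂` equals `lam` times the
Yoneda class of `ξ₁`: there is an isomorphism of representations `e : E₁ ≅ E₂` such that
`e(i₁ y) = i₂ (lam • y)` and `p₂ ∘ e = p₁`. -/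
def ScaledEquiv {Y X : BarbellRep} (lam : ℂ) (ξ₁ ξ₂ : BSES Y X) : Prop :=
  ∃ (e1 : ξ₁.E.V1 ≃ₗ[ℂ] ξ₂.E.V1) (e2 : ξ₁.E.V2 ≃ₗ[ℂ] ξ₂.E.V2),
    (∀ x, e1 (ξ₁.E.fa x) = ξ₂.E.fa (e1 x)) ∧
    (∀ y, e2 (ξ₁.E.fb y) = ξ₂.E.fb (e2 y)) ∧
    (∀ x, e2 (ξ₁.E.fc x) = ξ₂.E.fc (e1 x)) ∧
    (∀ y, e1 (ξ₁.i.g1 y) = ξ₂.i.g1 (lam • y)) ∧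
    (∀ y, e2 (ξ₁.i.g2 y) = ξ₂.i.g2 (lam • y)) ∧
    (∀ v, ξ₂.p.g1 (e1 v) = ξ₁.p.g1 v) ∧
    (∀ v, ξ₂.p.g2 (e2 v) = ξ₁.p.g2 v)

/-- The Yoneda extension group `Ext¹(X, Y)` (equivalence classes of short exact sequences
`0 → Y → E → X → 0` with the Baer-sum `ℂ`-vector space structure) is one-dimensional over
`ℂ`: there is a nonzero class (a non-split sequence), and any two nonzero classes are
proportional by a nonzero scalar. -/
def ExtOneDimensional (X Y : BarbellRep) : Prop :=
  (∃ ξ : BSES Y X, ¬ ξ.IsSplit) ∧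
    ∀ ξ₁ ξ₂ : BSES Y X, ¬ ξ₁.IsSplit → ¬ ξ₂.IsSplit →
      ∃ lam : ℂ, lam ≠ 0 ∧ ScaledEquiv lam ξ₁ ξ₂

def stdI : ((Fin 1 × Bool) → ℂ) →ₗ[ℂ] ((Fin 2 × Bool) → ℂ) where
  toFun y p := if p.1 = 0 then y (0, p.2) else 0
  map_add' u v := by
    funext p
    by_cases h : p.1 = 0 <;> simp [h]
  map_smul' c v := by
    funext p
    by_cases h : p.1 = 0 <;> simp [h]

def stdP : ((Fin 2 × Bool) → ℂ) →ₗ[ℂ] ((Fin 1 × Bool) → ℂ) where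
  toFun v p := v (1, p.2)
  map_add' u v := rfl
  map_smul' c v := rfl

lemma fin1ext {u v : (Fin 1 × Bool) → ℂ} (h0 : u (0, false) = v (0, false))
    (h1 : u (0, true) = v (0, true)) : u = v := by
  funext ⟨k, b⟩
  obtain rfl : k = 0 := Subsingleton.elim _ _
  cases b <;> assumption

lemma fin2ext {u v : (Fin 2 × Bool) → ℂ} (h0 : u (0, false) = v (0, false))
    (h1 : u (0, true) = v (0, true)) (h2 : u (1, false) = v (1, false))
    (h3 : u (1, true) = v (1, true)) : u = v := by
  funext ⟨k, b⟩
  fin_cases k <;> cases b <;> assumption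

lemma stdI_inj : Function.Injective stdI := by
  intro u v h
  apply fin1ext
  · simpa [stdI] using congrFun h (0, false)
  · simpa [stdI] using congrFun h (0, true)

lemma stdP_surj : Function.Surjective stdP := by
  intro v
  refine ⟨fun p => v (0, p.2), ?_⟩
  apply fin1ext <;> rfl

lemma std_exact : LinearMap.range stdI = LinearMap.ker stdP := by
  ext v
  simp only [LinearMap.mem_range, LinearMap.mem_ker]
  constructor
  · rintro ⟨y, rfl⟩
    apply fin1ext <;> simp [stdI, stdP]
  · intro h
    refine ⟨fun p => v (0, p.2), ?_⟩
    have h0 := congrFun h (0, false)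
    have h1 := congrFun h (0, true)
    simp only [stdP, LinearMap.coe_mk, AddHom.coe_mk, Pi.zero_apply] at h0 h1
    apply fin2ext <;> simp [stdI, h0, h1]

lemma stdI_a (x : (Fin 1 × Bool) → ℂ) : stdI (strFa 0 x) = strFa 1 (stdI x) := by
  apply fin2ext <;> simp [stdI, strFa]
lemma stdI_c (x : (Fin 1 × Bool) → ℂ) : stdI (strFc 0 x) = strFc 1 (stdI x) := by
  apply fin2ext <;> simp [stdI, strFc]
lemma stdP_a (x : (Fin 2 × Bool) → ℂ) : stdP (strFa 1 x) = strFa 0 (stdP x) := by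
  apply fin1ext <;> simp [stdP, strFa]
lemma stdP_c (x : (Fin 2 × Bool) → ℂ) : stdP (strFc 1 x) = strFc 0 (stdP x) := by
  apply fin1ext <;> simp [stdP, strFc]

def stdSES : BSES (Mstring 0) (Mstring 0) where
  E := Mstring 1
  i := ⟨stdI, stdI, stdI_a, stdI_a, stdI_c⟩
  p := ⟨stdP, stdP, stdP_a, stdP_a, stdP_c⟩
  inj1 := stdI_inj
  inj2 := stdI_inj
  surj1 := stdP_surj
  surj2 := stdP_surj
  exact1 := std_exact
  exact2 := std_exact

def x0 : (Fin 1 × Bool) → ℂ := fun p => if p.2 then 0 else 1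

def x1 : (Fin 1 × Bool) → ℂ := fun p => if p.2 then 1 else 0

lemma decomp (v : (Fin 1 × Bool) → ℂ) : v = v (0, false) • x0 + v (0, true) • x1 := by
  apply fin1ext <;> simp [x0, x1]

lemma strFa0 (v : (Fin 1 × Bool) → ℂ) : strFa 0 v = v (0, false) • x1 := by
  apply fin1ext <;> simp [strFa, x1]
lemma strFc0 (v : (Fin 1 × Bool) → ℂ) : strFc 0 v = v (0, true) • x0 := by
  apply fin1ext <;> simp [strFc, x0]

def m0 : (Mstring 0).V1 := x0
def m1 : (Mstring 0).V1 := x1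
def n0 : (Mstring 0).V2 := x0
def n1 : (Mstring 0).V2 := x1

lemma fa_m0 : (Mstring 0).fa m0 = m1 := (strFa0 x0).trans (by simp [x0, m1])
lemma fa_m1 : (Mstring 0).fa m1 = 0 := (strFa0 x1).trans (by simp [x1]; rfl)
lemma fb_n0 : (Mstring 0).fb n0 = n1 := fa_m0
lemma fb_n1 : (Mstring 0).fb n1 = 0 := fa_m1
lemma fc_m0 : (Mstring 0).fc m0 = 0 := (strFc0 x0).trans (by simp [x0]; rfl)
lemma fc_m1 : (Mstring 0).fc m1 = n0 := (strFc0 x1).trans (by simp [x1, n0])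

def co (b : Bool) (v : (Mstring 0).V1) : ℂ := (v : (Fin 1 × Bool) → ℂ) (0, b)
def co2 (b : Bool) (v : (Mstring 0).V2) : ℂ := (v : (Fin 1 × Bool) → ℂ) (0, b)

lemma dec1 (v : (Mstring 0).V1) : co false v • m0 + co true v • m1 = v := (decomp v).symm
lemma dec2 (v : (Mstring 0).V2) : co2 false v • n0 + co2 true v • n1 = v := (decomp v).symm
lemma fa0 (v : (Mstring 0).V1) : (Mstring 0).fa v = co false v • m1 := strFa0 v
lemma fb0 (v : (Mstring 0).V2) : (Mstring 0).fb v = co2 false v • n1 := strFa0 v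
lemma fc0 (v : (Mstring 0).V1) : (Mstring 0).fc v = co true v • n0 := strFc0 v

lemma std_not_split : ¬ stdSES.IsSplit := by
  rintro ⟨s, h1, -⟩
  have hc := s.comm_c m0
  rw [fc_m0, map_zero] at hc
  have e := congrFun (h1 m0) ((0 : Fin 1), false)
  have hc' := congrFun hc ((0 : Fin 2), true)
  have e' : (s.g1 m0 : (Fin 2 × Bool) → ℂ) (1, false) = 1 := e
  have hc'' : (0 : ℂ) = (s.g1 m0 : (Fin 2 × Bool) → ℂ) (1, false) := hc'
  rw [e'] at hc''
  exact zero_ne_one hc''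

lemma BarbellRep.aa (M : BarbellRep) (x : M.V1) : M.fa (M.fa x) = 0 :=
  LinearMap.congr_fun M.rel_a x
lemma BarbellRep.bb (M : BarbellRep) (x : M.V2) : M.fb (M.fb x) = 0 :=
  LinearMap.congr_fun M.rel_b x

lemma BSES.pi1 {Y X : BarbellRep} (ξ : BSES Y X) (y : Y.V1) : ξ.p.g1 (ξ.i.g1 y) = 0 := by
  have : ξ.i.g1 y ∈ LinearMap.range ξ.i.g1 := ⟨_, rfl⟩
  rw [ξ.exact1] at this
  exact this
lemma BSES.pi2 {Y X : BarbellRep} (ξ : BSES Y X) (y : Y.V2) : ξ.p.g2 (ξ.i.g2 y) = 0 := by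
  have : ξ.i.g2 y ∈ LinearMap.range ξ.i.g2 := ⟨_, rfl⟩
  rw [ξ.exact2] at this
  exact this

lemma exists_lift (ξ : BSES (Mstring 0) (Mstring 0)) :
    ∃ (u : ξ.E.V1) (β : ℂ), ξ.p.g1 u = m0 ∧ ξ.E.fc u = β • ξ.i.g2 n1 := by
  obtain ⟨u, hu⟩ := ξ.surj1 m0
  have hk : ξ.E.fc u ∈ LinearMap.ker ξ.p.g2 := by
    rw [LinearMap.mem_ker, ξ.p.comm_c, hu, fc_m0]
  rw [← ξ.exact2] at hk
  obtain ⟨y, hy⟩ := hk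
  refine ⟨u - co2 false y • ξ.i.g1 m1, co2 true y, ?_, ?_⟩
  · rw [map_sub, map_smul, hu, ξ.pi1, smul_zero, sub_zero]
  · rw [map_sub, map_smul, ← ξ.i.comm_c, fc_m1, ← hy, sub_eq_iff_eq_add', ← map_smul, ← map_smul,
      ← map_add, dec2]

def pairMap {V : Type} [AddCommGroup V] [Module ℂ V] (u w : V) : ((Fin 1 × Bool) → ℂ) →ₗ[ℂ] V where
  toFun v := v (0, false) • u + v (0, true) • w
  map_add' x y := by simp only [Pi.add_apply]; module
  map_smul' c x := by simp only [Pi.smul_apply, smul_eq_mul, RingHom.id_apply]; module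

def pm1 {V : Type} [AddCommGroup V] [Module ℂ V] (u w : V) : (Mstring 0).V1 →ₗ[ℂ] V := pairMap u w
def pm2 {V : Type} [AddCommGroup V] [Module ℂ V] (u w : V) : (Mstring 0).V2 →ₗ[ℂ] V := pairMap u w

section
variable {V : Type} [AddCommGroup V] [Module ℂ V] (u w : V)

lemma pairMap_apply (v : (Fin 1 × Bool) → ℂ) :
    pairMap u w v = v (0, false) • u + v (0, true) • w := rfl
lemma pm1_apply (v) : pm1 u w v = co false v • u + co true v • w := rfl
lemma pm2_apply (v) : pm2 u w v = co2 false v • u + co2 true v • w := rfl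
lemma pm1_m1 : pm1 u w m1 = w := by
  change pairMap u w x1 = w
  simp [pairMap_apply, x1]
lemma pm2_n0 : pm2 u w n0 = u := by
  change pairMap u w x0 = u
  simp [pairMap_apply, x0]
lemma pm2_n1 : pm2 u w n1 = w := pm1_m1 u w
end

lemma sec1 (ξ : BSES (Mstring 0) (Mstring 0)) {u : ξ.E.V1} (hu : ξ.p.g1 u = m0)
    (x : (Mstring 0).V1) : ξ.p.g1 (pm1 u (ξ.E.fa u) x) = x := by
  rw [pm1_apply, map_add, map_smul, map_smul, ξ.p.comm_a, hu, fa_m0, dec1]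

lemma sec2 (ξ : BSES (Mstring 0) (Mstring 0)) {u : ξ.E.V1} (hu : ξ.p.g1 u = m0)
    (x : (Mstring 0).V2) :
    ξ.p.g2 (pm2 (ξ.E.fc (ξ.E.fa u)) (ξ.E.fb (ξ.E.fc (ξ.E.fa u))) x) = x := by
  rw [pm2_apply, map_add, map_smul, map_smul, ξ.p.comm_b, ξ.p.comm_c, ξ.p.comm_a, hu, fa_m0,
    fc_m1, fb_n0, dec2]

lemma split_of_zero (ξ : BSES (Mstring 0) (Mstring 0)) {u : ξ.E.V1} (hu : ξ.p.g1 u = m0)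
    (hc : ξ.E.fc u = 0) : ξ.IsSplit := by
  refine ⟨⟨pm1 u (ξ.E.fa u), pm2 (ξ.E.fc (ξ.E.fa u)) (ξ.E.fb (ξ.E.fc (ξ.E.fa u))),
    ?_, ?_, ?_⟩, sec1 ξ hu, sec2 ξ hu⟩
  · intro x
    rw [fa0 x, map_smul, pm1_m1, pm1_apply, map_add, map_smul, map_smul, ξ.E.aa, smul_zero,
      add_zero]
  · intro x
    rw [fb0 x, map_smul, pm2_n1, pm2_apply, map_add, map_smul, map_smul, ξ.E.bb, smul_zero,
      add_zero]
  · intro x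
    rw [fc0 x, map_smul, pm2_n0, pm1_apply, map_add, map_smul, map_smul, hc, smul_zero,
      zero_add]

def stdQ : ((Fin 2 × Bool) → ℂ) →ₗ[ℂ] ((Fin 1 × Bool) → ℂ) where
  toFun v p := v (0, p.2)
  map_add' u v := rfl
  map_smul' c v := rfl

lemma bij_of {A X B E : Type} [AddCommGroup A] [Module ℂ A] [AddCommGroup X] [Module ℂ X]
    [AddCommGroup B] [Module ℂ B] [AddCommGroup E] [Module ℂ E]
    (i₀ : A →ₗ[ℂ] B) (p₀ : B →ₗ[ℂ] X) (i : A →ₗ[ℂ] E) (p : E →ₗ[ℂ] X) (G : B →ₗ[ℂ] E)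
    {β : ℂ} (hβ : β ≠ 0) (hi : Function.Injective i) (hp₀ : Function.Surjective p₀)
    (h₀ : LinearMap.range i₀ = LinearMap.ker p₀) (h : LinearMap.range i = LinearMap.ker p)
    (hGi : ∀ y, G (i₀ y) = i (β • y)) (hpG : ∀ v, p (G v) = p₀ v) : Function.Bijective G := by
  constructor
  · rw [← LinearMap.ker_eq_bot, LinearMap.ker_eq_bot']
    intro v hv
    have : v ∈ LinearMap.ker p₀ := by rw [LinearMap.mem_ker, ← hpG, hv, map_zero]
    rw [← h₀] at this
    obtain ⟨y, rfl⟩ := this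
    rw [hGi, ← map_zero i] at hv
    have := hi hv
    rw [(smul_eq_zero.1 this).resolve_left hβ, map_zero]
  · intro w
    obtain ⟨v, hv⟩ := hp₀ (p w)
    have : w - G v ∈ LinearMap.ker p := by rw [LinearMap.mem_ker, map_sub, hpG, hv, sub_self]
    rw [← h] at this
    obtain ⟨y, hy⟩ := this
    refine ⟨i₀ (β⁻¹ • y) + v, ?_⟩
    rw [map_add, hGi, smul_inv_smul₀ hβ, hy, sub_add_cancel]

lemma scaled_std (ξ : BSES (Mstring 0) (Mstring 0)) (hξ : ¬ ξ.IsSplit) :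
    ∃ β : ℂ, β ≠ 0 ∧ ScaledEquiv β stdSES ξ := by
  obtain ⟨u, β, hu, hc⟩ := exists_lift ξ
  have hβ : β ≠ 0 := by
    rintro rfl
    exact hξ (split_of_zero ξ hu (by rw [hc, zero_smul]))
  refine ⟨β, hβ, ?_⟩
  let G1 : ((Fin 2 × Bool) → ℂ) →ₗ[ℂ] ξ.E.V1 :=
    β • (pairMap (ξ.i.g1 m0) (ξ.i.g1 m1)) ∘ₗ stdQ + pairMap u (ξ.E.fa u) ∘ₗ stdP
  let G2 : ((Fin 2 × Bool) → ℂ) →ₗ[ℂ] ξ.E.V2 :=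
    β • (pairMap (ξ.i.g2 n0) (ξ.i.g2 n1)) ∘ₗ stdQ +
      pairMap (ξ.E.fc (ξ.E.fa u)) (ξ.E.fb (ξ.E.fc (ξ.E.fa u))) ∘ₗ stdP
  have hG1 : ∀ v, G1 v = β • (v (0, false) • ξ.i.g1 m0 + v (0, true) • ξ.i.g1 m1) +
    (v (1, false) • u + v (1, true) • ξ.E.fa u) := fun v => rfl
  have hG2 : ∀ v, G2 v = β • (v (0, false) • ξ.i.g2 n0 + v (0, true) • ξ.i.g2 n1) +
    (v (1, false) • ξ.E.fc (ξ.E.fa u) + v (1, true) • ξ.E.fb (ξ.E.fc (ξ.E.fa u))) := fun v => rfl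
  have hGi1 : ∀ y, G1 (stdI y) = ξ.i.g1 (β • y) := fun y => by
    have e : ξ.i.g1 y = y (0, false) • ξ.i.g1 m0 + y (0, true) • ξ.i.g1 m1 := by
      conv_lhs => rw [← dec1 y, map_add, map_smul, map_smul]
      rfl
    refine Eq.trans ?_ ((congrArg (fun z => β • z) e).symm.trans (map_smul ξ.i.g1 β y).symm)
    change _ = β • (y (0, false) • ξ.i.g1 m0 + y (0, true) • ξ.i.g1 m1)
    rw [hG1]
    simp [stdI]
  have hpG1 : ∀ v, ξ.p.g1 (G1 v) = stdP v := fun v => by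
    have : G1 v = β • (v (0, false) • ξ.i.g1 m0 + v (0, true) • ξ.i.g1 m1) +
      pm1 u (ξ.E.fa u) (stdP v) := rfl
    refine Eq.trans ?_ (sec1 ξ hu (stdP v))
    rw [this, map_add, map_smul, map_add, map_smul, map_smul, ξ.pi1, ξ.pi1, smul_zero,
      smul_zero, add_zero, smul_zero, zero_add]
  have hGi2 : ∀ y, G2 (stdI y) = ξ.i.g2 (β • y) := fun y => by
    have e : ξ.i.g2 y = y (0, false) • ξ.i.g2 n0 + y (0, true) • ξ.i.g2 n1 := by
      conv_lhs => rw [← dec2 y, map_add, map_smul, map_smul]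
      rfl
    refine Eq.trans ?_ ((congrArg (fun z => β • z) e).symm.trans (map_smul ξ.i.g2 β y).symm)
    change _ = β • (y (0, false) • ξ.i.g2 n0 + y (0, true) • ξ.i.g2 n1)
    rw [hG2]
    simp [stdI]
  have hpG2 : ∀ v, ξ.p.g2 (G2 v) = stdP v := fun v => by
    have : G2 v = β • (v (0, false) • ξ.i.g2 n0 + v (0, true) • ξ.i.g2 n1) +
      pm2 (ξ.E.fc (ξ.E.fa u)) (ξ.E.fb (ξ.E.fc (ξ.E.fa u))) (stdP v) := rfl
    refine Eq.trans ?_ (sec2 ξ hu (stdP v))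
    rw [this, map_add, map_smul, map_add, map_smul, map_smul, ξ.pi2, ξ.pi2, smul_zero,
      smul_zero, add_zero, smul_zero, zero_add]
  have b1 := bij_of stdI stdP ξ.i.g1 ξ.p.g1 G1 hβ ξ.inj1 stdP_surj std_exact ξ.exact1 hGi1 hpG1
  have b2 := bij_of stdI stdP ξ.i.g2 ξ.p.g2 G2 hβ ξ.inj2 stdP_surj std_exact ξ.exact2 hGi2 hpG2
  have ha' : ∀ x, G1 (strFa 1 x) = ξ.E.fa (G1 x) := by
    intro x
    rw [hG1, hG1]
    simp only [map_add, map_smul, ← ξ.i.comm_a, fa_m0, fa_m1, ξ.E.aa]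
    simp [strFa]
  have hb' : ∀ x, G2 (strFa 1 x) = ξ.E.fb (G2 x) := by
    intro x
    rw [hG2, hG2]
    simp only [map_add, map_smul, ← ξ.i.comm_b, fb_n0, fb_n1, ξ.E.bb]
    simp [strFa]
  have hc' : ∀ x, G2 (strFc 1 x) = ξ.E.fc (G1 x) := by
    intro x
    rw [hG2, hG1]
    simp only [map_add, map_smul, ← ξ.i.comm_c, fc_m0, fc_m1, hc]
    simp [strFc]
    module
  exact ⟨LinearEquiv.ofBijective G1 b1, LinearEquiv.ofBijective G2 b2, ha', hb', hc', hGi1, hGi2,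
    hpG1, hpG2⟩

lemma scaled_combine {Y X : BarbellRep} {α β : ℂ} (hα : α ≠ 0) {ξ₀ ξ₁ ξ₂ : BSES Y X}
    (h1 : ScaledEquiv α ξ₀ ξ₁) (h2 : ScaledEquiv β ξ₀ ξ₂) : ScaledEquiv (β * α⁻¹) ξ₁ ξ₂ := by
  obtain ⟨e1, e2, ha, hb, hc, i1, i2, p1, p2⟩ := h1
  obtain ⟨f1, f2, ga, gb, gc, j1, j2, q1, q2⟩ := h2
  refine ⟨e1.symm.trans f1, e2.symm.trans f2, ?_, ?_, ?_, ?_, ?_, ?_, ?_⟩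
  · intro x
    obtain ⟨x, rfl⟩ := e1.surjective x
    simp [← ha, ga]
  · intro x
    obtain ⟨x, rfl⟩ := e2.surjective x
    simp [← hb, gb]
  · intro x
    obtain ⟨x, rfl⟩ := e1.surjective x
    simp [← hc, gc]
  · intro y
    have := i1 (α⁻¹ • y)
    rw [smul_inv_smul₀ hα] at this
    rw [← this, LinearEquiv.trans_apply, LinearEquiv.symm_apply_apply, j1, smul_smul]
  · intro y
    have := i2 (α⁻¹ • y)
    rw [smul_inv_smul₀ hα] at this
    rw [← this, LinearEquiv.trans_apply, LinearEquiv.symm_apply_apply, j2, smul_smul]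
  · intro x
    obtain ⟨x, rfl⟩ := e1.surjective x
    simp [p1, q1]
  · intro x
    obtain ⟨x, rfl⟩ := e2.surjective x
    simp [p2, q2]

/-- There is a non-split short exact sequence
`0 → M(acb) → M(acbc⁻¹acb) → M(acb) → 0`; the Yoneda extension group
`Ext¹(M(acb), M(acb))` is one-dimensional over `ℂ`; and consequently every non-split
self-extension of `M(acb)` has middle term isomorphic to `M(acbc⁻¹acb)`. -/
theorem barbell_self_extension_of_Macb :
    (∃ ξ : BSES (Mstring 0) (Mstring 0), ¬ ξ.IsSplit ∧ RepIso ξ.E (Mstring 1)) ∧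
    ExtOneDimensional (Mstring 0) (Mstring 0) ∧
    (∀ ξ : BSES (Mstring 0) (Mstring 0), ¬ ξ.IsSplit → RepIso ξ.E (Mstring 1)) := by
  refine ⟨⟨stdSES, std_not_split, LinearEquiv.refl _ _, LinearEquiv.refl _ _,
    fun _ => rfl, fun _ => rfl, fun _ => rfl⟩, ⟨⟨stdSES, std_not_split⟩, ?_⟩, ?_⟩
  · intro ξ₁ ξ₂ h₁ h₂
    obtain ⟨α, hα, e⟩ := scaled_std ξ₁ h₁
    obtain ⟨β, hβ, f⟩ := scaled_std ξ₂ h₂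
    exact ⟨β * α⁻¹, mul_ne_zero hβ (inv_ne_zero hα), scaled_combine hα e f⟩
  · intro ξ h
    obtain ⟨α, hα, e1, e2, ha, hb, hc, -⟩ := scaled_std ξ h
    change RepIso ξ.E stdSES.E
    refine ⟨e1.symm, e2.symm, ?_, ?_, ?_⟩
    · intro x
      obtain ⟨x, rfl⟩ := e1.surjective x
      rw [← ha, LinearEquiv.symm_apply_apply, LinearEquiv.symm_apply_apply]
    · intro x
      obtain ⟨x, rfl⟩ := e2.surjective x
      rw [← hb, LinearEquiv.symm_apply_apply, LinearEquiv.symm_apply_apply]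
    · intro x
      obtain ⟨x, rfl⟩ := e1.surjective x
      rw [← hc, LinearEquiv.symm_apply_apply, LinearEquiv.symm_apply_apply]
end
end

section
/- In the quantum torus 𝕋, the partial products P_N := E(t^{(1,0)})² · E(t^{(2,1)})² ⋯ E(t^{(N,N−1)})² · E(t^{(1,1)})⁴ · E(−q^{1/2} t^{(2,2)})⁻¹ · E(−q^{−1/2} t^{(2,2)})⁻¹ · E(t^{(N−1,N)})² ⋯ E(t^{(1,2)})² · E(t^{(0,1)})² (the first product taken over d = 1, …, N in increasing order of d from left to right, and the last over d = N, …, 1 in decreasing order of d from left to right) converge coefficientwise as N → ∞, and their limit equals E(t^{(0,1)})² · E(t^{(1,0)})². -/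
/-!
# Statement 13

Let `ℛ` be the subring of `ℚ(q^{1/2})` generated by `q^{1/2}`, `q^{-1/2}` and `(1-qⁿ)⁻¹`
for all `n ≥ 1`.  Let `𝕋` be the `ℛ`-module of all functions `ℕ² → ℛ`, an element `f`
being written `Σ_d f(d)·t^d`, with the multiplication determined by
`t^d·t^{d'} = q^{(d₂d'₁ - d₁d'₂)/2}·t^{d+d'}` — the quantum torus attached to the Euler
form of the barbell quiver.  For `λ ∈ ℛ` and nonzero `d ∈ ℕ²` the quantum dilogarithm is
`E(λ·t^d) := Σ_{k ≥ 0} (-1)^k q^{k/2} λ^k t^{kd} / ((1-q)(1-q²)⋯(1-q^k)) ∈ 𝕋`; it has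
constant coefficient `1` and is invertible in `𝕋`.

The statement: the partial products
`P_N := E(t^{(1,0)})² · E(t^{(2,1)})² ⋯ E(t^{(N,N-1)})² · E(t^{(1,1)})⁴ ·
E(-q^{1/2}t^{(2,2)})⁻¹ · E(-q^{-1/2}t^{(2,2)})⁻¹ · E(t^{(N-1,N)})² ⋯ E(t^{(1,2)})² ·
E(t^{(0,1)})²`
converge coefficientwise as `N → ∞` (for every `d ∈ ℕ²` the coefficient `P_N(d)` is
eventually constant) and their limit equals `E(t^{(0,1)})² · E(t^{(1,0)})²`.

The two inverse factors are encoded by elements `U, V` hypothesised to be the (two-sided,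
hence unique) inverses of `E(-q^{1/2}t^{(2,2)})` and `E(-q^{-1/2}t^{(2,2)})` in `𝕋`.
-/

noncomputable section

/-- The field `ℚ(q^{1/2})`, realised as the field of rational functions over `ℚ` in the
variable `qh := q^{1/2}` (so that `q = qh²`). -/
abbrev FF := RatFunc ℚ

/-- The variable `q^{1/2}`. -/
def qh : FF := RatFunc.X

/-- The generating set `{q^{1/2}, q^{-1/2}} ∪ {(1 - qⁿ)⁻¹ : n ≥ 1}`. -/
def genSet : Set FF := {qh, qh⁻¹} ∪ {y | ∃ n : ℕ, 1 ≤ n ∧ y = (1 - qh ^ (2 * n))⁻¹}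

/-- The subring `ℛ` of `ℚ(q^{1/2})` generated by `q^{1/2}`, `q^{-1/2}` and the `(1-qⁿ)⁻¹`. -/
def Rcal : Subring FF := Subring.closure genSet

/-- `q^{1/2}` as an element of `ℛ`. -/
def qhR : Rcal := ⟨qh, Subring.subset_closure (by left; left; rfl)⟩

/-- `q^{-1/2}` as an element of `ℛ`. -/
def qhinvR : Rcal := ⟨qh⁻¹, Subring.subset_closure (by left; right; rfl)⟩

/-- `(1 - q^{n+1})⁻¹` as an element of `ℛ`. -/
def dinvR (n : ℕ) : Rcal :=
  ⟨(1 - qh ^ (2 * (n + 1)))⁻¹, Subring.subset_closure (Or.inr ⟨n + 1, by omega, rfl⟩)⟩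

/-- The quantum torus `𝕋`: all functions `ℕ² → ℛ`, an element `f` being thought of as the
formal sum `Σ_d f(d)·t^d`. -/
abbrev T13 := (ℕ × ℕ) → Rcal

/-- The twist `t^u · t^v = tw u v · t^(u+v)`, where
`tw u v = q^{(u₂v₁ - u₁v₂)/2} = (q^{1/2})^{u₂v₁} · (q^{-1/2})^{u₁v₂}`. -/
def tw (u v : ℕ × ℕ) : Rcal := qhR ^ (u.2 * v.1) * qhinvR ^ (u.1 * v.2)

/-- The unit `1 = t^0` of `𝕋`. -/
def oneT : T13 := fun d => if d = (0, 0) then 1 else 0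

/-- Multiplication on `𝕋`: the coefficient of `t^d` in `f·g` is the finite sum
`Σ_{d' + d'' = d} tw d' d'' · f(d') · g(d'')` (the pairs `(d', d'')` with `d' + d'' = d`
being parametrised by `d'` in the box `[0, d₁] × [0, d₂]`). -/
def mulT (f g : T13) : T13 := fun d =>
  ∑ x ∈ Finset.range (d.1 + 1) ×ˢ Finset.range (d.2 + 1),
    tw (x.1, x.2) (d.1 - x.1, d.2 - x.2) * f (x.1, x.2) * g (d.1 - x.1, d.2 - x.2)

/-- Product of a finite list of elements of `𝕋` (from left to right). -/
def prodT (l : List T13) : T13 := l.foldr mulT oneT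

/-- `k`-th power in `𝕋`. -/
def powT (f : T13) (k : ℕ) : T13 := prodT (List.replicate k f)

/-- The `k`-th coefficient `(-1)^k q^{k/2} λ^k / ((1-q)(1-q²)⋯(1-q^k))` of the quantum
dilogarithm `E(λ·t^d)`. -/
def Ecoeff (lam : Rcal) (k : ℕ) : Rcal :=
  (-1) ^ k * qhR ^ k * lam ^ k * ∏ i ∈ Finset.range k, dinvR i

/-- For `d ≠ 0`, the multiplicity `k` with `e = k·d`, if `e` is a multiple of `d`. -/
def kOf (d e : ℕ × ℕ) : ℕ := if d.1 = 0 then e.2 / d.2 else e.1 / d.1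

/-- The quantum dilogarithm
`E(λ·t^d) = Σ_{k ≥ 0} (-1)^k q^{k/2} λ^k t^{kd} / ((1-q)(1-q²)⋯(1-q^k)) ∈ 𝕋`
(for `d ≠ 0`): its coefficient at `e = k·d` is `Ecoeff lam k`, and all other coefficients
vanish. -/
def Edlog (lam : Rcal) (d : ℕ × ℕ) : T13 := fun e =>
  if e = (kOf d e * d.1, kOf d e * d.2) then Ecoeff lam (kOf d e) else 0

/-- `E(t^d)²`. -/
def Esq (d : ℕ × ℕ) : T13 := powT (Edlog 1 d) 2

/-- The partial product
`P_N = E(t^{(1,0)})² ⋯ E(t^{(N,N-1)})² · E(t^{(1,1)})⁴ · E(-q^{1/2}t^{(2,2)})⁻¹ ·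
E(-q^{-1/2}t^{(2,2)})⁻¹ · E(t^{(N-1,N)})² ⋯ E(t^{(0,1)})²`,
where `U` and `V` denote the two inverse factors. -/
def Ppartial (U V : T13) (N : ℕ) : T13 :=
  prodT (((List.range N).map fun i => Esq (i + 1, i)) ++
    ([powT (Edlog 1 (1, 1)) 4, U, V] ++
      ((List.range N).reverse.map fun i => Esq (i, i + 1))))

section scalar
variable {K : Type*} [Field K]

def qp (q : K) (n : ℕ) : K := ∏ i ∈ Finset.range n, (1 - q ^ (i + 1))

theorem qp_zero (q : K) : qp q 0 = 1 := by simp [qp]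
theorem qp_succ (q : K) (n : ℕ) : qp q (n + 1) = qp q n * (1 - q ^ (n + 1)) := by
  simp [qp, Finset.prod_range_succ]

theorem qp_ne (q : K) (hq : ∀ n : ℕ, 1 - q ^ (n + 1) ≠ 0) (n : ℕ) : qp q n ≠ 0 :=
  Finset.prod_ne_zero_iff.2 fun i _ => hq i

theorem qp_inv_succ (q : K) (hq : ∀ n : ℕ, 1 - q ^ (n + 1) ≠ 0) (n : ℕ) :
    (1 - q ^ (n + 1)) * (qp q (n + 1))⁻¹ = (qp q n)⁻¹ := by
  rw [qp_succ]; have := hq n; have := qp_ne q hq n; field_simp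

def Rr (q : K) (n k : ℕ) : K := if k ≤ n then (qp q (n - k))⁻¹ else 0

theorem Rr_zero (q : K) (n : ℕ) : Rr q n 0 = (qp q n)⁻¹ := by simp [Rr]

theorem Rr_succ_succ (q : K) (n k : ℕ) : Rr q (n + 1) (k + 1) = Rr q n k := by
  simp [Rr]

theorem Rr_step (q : K) (hq : ∀ n : ℕ, 1 - q ^ (n + 1) ≠ 0) (n k : ℕ) :
    q ^ k * Rr q n (k + 1) = (q ^ k - q ^ n) * Rr q n k := by
  unfold Rr
  split_ifs with h1 h2 h2
  · obtain ⟨j, rfl⟩ := Nat.exists_eq_add_of_le h1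
    have e1 : k + 1 + j - (k + 1) = j := by omega
    have e2 : k + 1 + j - k = j + 1 := by omega
    rw [e1, e2, ← qp_inv_succ q hq]; ring
  · omega
  · have : k = n := by omega
    subst this; simp
  · simp

theorem choose_two_succ (k : ℕ) : (k + 1).choose 2 = k.choose 2 + k := by
  rw [Nat.choose_succ_succ' k 1]; simp; omega

theorem PIrec (q : K) (hq : ∀ n : ℕ, 1 - q ^ (n + 1) ≠ 0) (i j : ℕ) :
    ∑ k ∈ Finset.range (i + 1), (-1) ^ k * q ^ (k.choose 2) * Rr q i k * (qp q k)⁻¹ * Rr q j k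
      = q ^ (i * j) * (qp q i)⁻¹ * (qp q j)⁻¹ := by
  induction i with
  | zero => simp [Rr, qp]
  | succ i ih =>
    have h := hq i
    apply mul_left_cancel₀ h
    have key : ∀ k, (1 - q ^ (i + 1)) *
        ((-1) ^ k * q ^ (k.choose 2) * Rr q (i + 1) k * (qp q k)⁻¹ * Rr q j k) =
        (-1) ^ k * q ^ (k.choose 2) * (q ^ k * Rr q (i+1) (k+1)) * (qp q k)⁻¹ * Rr q j k +
        (-1) ^ k * q ^ (k.choose 2) * Rr q (i + 1) k * ((1 - q ^ k) * (qp q k)⁻¹) * Rr q j k := by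
      intro k
      rw [Rr_step q hq (i+1) k]; ring
    rw [Finset.mul_sum, Finset.sum_congr rfl (fun k _ => key k), Finset.sum_add_distrib,
      Finset.sum_range_succ, Finset.sum_range_succ' (fun k => (-1) ^ k * q ^ (k.choose 2) *
        Rr q (i + 1) k * ((1 - q ^ k) * (qp q k)⁻¹) * Rr q j k)]
    have z : Rr q (i+1) (i+1+1) = 0 := by simp [Rr]
    rw [z]
    simp only [mul_zero, zero_mul, add_zero, pow_zero, sub_self]
    rw [← Finset.sum_add_distrib]
    have : ∀ k, (-1) ^ k * q ^ (k.choose 2) * (q ^ k * Rr q (i+1) (k+1)) * (qp q k)⁻¹ * Rr q j k +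
       (-1) ^ (k+1) * q ^ ((k+1).choose 2) * Rr q (i + 1) (k+1) *
         ((1 - q ^ (k+1)) * (qp q (k+1))⁻¹) * Rr q j (k+1) =
        q ^ j * ((-1) ^ k * q ^ (k.choose 2) * Rr q i k * (qp q k)⁻¹ * Rr q j k) := by
      intro k
      rw [qp_inv_succ q hq, choose_two_succ, Rr_succ_succ]
      have := Rr_step q hq j k
      linear_combination (-(-1) ^ k * q ^ (k.choose 2) * Rr q i k * (qp q k)⁻¹) * this
    rw [Finset.sum_congr rfl (fun k _ => this k), ← Finset.mul_sum, ih, ← qp_inv_succ q hq]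
    ring

open PowerSeries

def PS (q a : K) : K⟦X⟧ := mk fun j => (-1) ^ j * q ^ (j.choose 2) * a ^ j * (qp q j)⁻¹
def JS (q a : K) : K⟦X⟧ := mk fun j => a ^ j * (qp q j)⁻¹

theorem PS_step (q : K) (hq : ∀ n : ℕ, 1 - q ^ (n + 1) ≠ 0) (a : K) :
    PS q a = (1 - C a * X) * PS q (q * a) := by
  ext j
  rw [sub_mul, one_mul, mul_assoc, map_sub, coeff_C_mul]
  rcases j with _ | j
  · simp [PS]
  · rw [coeff_succ_X_mul]
    simp only [PS, coeff_mk]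
    rw [choose_two_succ]
    linear_combination ((-1)^(j+1) * q ^ (j.choose 2 + j) * a ^ (j+1)) * qp_inv_succ q hq j

theorem JS_step (q : K) (hq : ∀ n : ℕ, 1 - q ^ (n + 1) ≠ 0) (a : K) :
    JS q (q * a) = (1 - C a * X) * JS q a := by
  ext j
  rw [sub_mul, one_mul, mul_assoc, map_sub, coeff_C_mul]
  rcases j with _ | j
  · simp [JS]
  · rw [coeff_succ_X_mul]
    simp only [JS, coeff_mk]
    linear_combination (-a ^ (j+1)) * qp_inv_succ q hq j

theorem rescale_PS (q a b : K) : rescale b (PS q a) = PS q (b * a) := by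
  ext j; simp [PS, coeff_rescale]; ring
theorem rescale_JS (q a b : K) : rescale b (JS q a) = JS q (b * a) := by
  ext j; simp [JS, coeff_rescale]; ring

theorem JS_mul_PS (q : K) (hq : ∀ n : ℕ, 1 - q ^ (n + 1) ≠ 0) (a : K) :
    JS q a * PS q a = 1 := by
  have h : rescale q (JS q a * PS q a) = JS q a * PS q a := by
    rw [map_mul, rescale_JS, rescale_PS, JS_step q hq, PS_step q hq a]; ring
  ext j
  rcases j with _ | j
  · simp [JS, PS, qp]
  · have := congrArg (coeff (j+1)) h
    rw [coeff_rescale] at this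
    have h2 : (1 - q ^ (j+1)) * coeff (j+1) (JS q a * PS q a) = 0 := by
      linear_combination -this
    rcases mul_eq_zero.1 h2 with h3 | h3
    · exact absurd h3 (hq j)
    · rw [h3]; simp [coeff_one]

theorem bracket (q x M : K) (hx : x ≠ 0) (hM : M ≠ 0) (hd : 1 - q * x * M ≠ 0) :
    (1 - C (1 / (x^2*M)) * X) * (1 - C (q/x) * X) * (1 - C (q/(x*M)) * X)
     - C x * (1 - C (q/(x^2*M)) * X)
     - C (q^2*M/(1-q*x*M)) * X * (1 - C (1 / (x^2*M)) * X) * (1 - C (q/(x*M)) * X)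
    = C (1 - x) - C (1/(x^2*M)/(1-q*x*M)) * X * (1 - C (q/x) * X) * (1 - C (q/(x*M)) * X)
      := by
  have e0 : ∀ (a b c d e f g : K), (1 - C a * X) * (1 - C b * X) * (1 - C c * X)
     - C d * (1 - C e * X) - C f * X * (1 - C a * X) * (1 - C c * X)
     - (C g - C (a * (1/(1-q*x*M))) * X * (1 - C b * X) * (1 - C c * X)) =
     C (1 - d - g) + C (-a-b-c + d * e - f + a*(1/(1-q*x*M))) * X
      + C (a*b+b*c+a*c + f*a+f*c - a*(1/(1-q*x*M))*(b+c)) * X^2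
      + C (-a*b*c - f*a*c + a*(1/(1-q*x*M))*(b*c)) * X^3 := by
    intro a b c d e f g
    simp only [map_add, map_sub, map_mul, map_one, map_neg]
    ring
  have := e0 (1 / (x^2*M)) (q/x) (q/(x*M)) x (q/(x^2*M)) (q^2*M/(1-q*x*M)) (1-x)
  rw [← sub_eq_zero, div_eq_mul_one_div (1/(x^2*M)) (1-q*x*M), this]
  obtain ⟨i, hi⟩ : ∃ i, i * (1 - q * x * M) = 1 := ⟨_, inv_mul_cancel₀ hd⟩
  have hi' : (1 - q * x * M)⁻¹ = i := (eq_inv_of_mul_eq_one_left hi).symm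
  have h1 : 1 - x - (1 - x) = 0 := by ring
  have h2 : -(1 / (x^2*M))-(q/x)-(q/(x*M)) + x * (q/(x^2*M)) - (q^2*M/(1-q*x*M))
    + (1 / (x^2*M))*(1/(1-q*x*M)) = 0 := by
    simp only [div_eq_mul_inv, hi', mul_inv]
    field_simp
    linear_combination (1 + q*x*M) * hi
  have h3 : (1 / (x^2*M))*(q/x)+(q/x)*(q/(x*M))+(1 / (x^2*M))*(q/(x*M)) +
     (q^2*M/(1-q*x*M))*(1 / (x^2*M))+(q^2*M/(1-q*x*M))*(q/(x*M))
     - (1 / (x^2*M))*(1/(1-q*x*M))*((q/x)+(q/(x*M))) = 0 := by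
    simp only [div_eq_mul_inv, hi', mul_inv]
    field_simp
    linear_combination (-(q + q*M+q^2*M*x)) * hi
  have h4 : -(1 / (x^2*M))*(q/x)*(q/(x*M)) - (q^2*M/(1-q*x*M))*(1 / (x^2*M))*(q/(x*M)) +
    (1 / (x^2*M))*(1/(1-q*x*M))*((q/x)*(q/(x*M))) = 0 := by
    simp only [div_eq_mul_inv, hi', mul_inv]
    field_simp
    linear_combination (q^2) * hi
  rw [h1, h2, h3, h4]; simp

def Tt (q : K) (m n : ℕ) : K⟦X⟧ :=
  C ((q ^ n / (q ^ (n * n) * q ^ (m * n))) * (qp q n)⁻¹ * (qp q (n + m))⁻¹) * X ^ n *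
    (1 - C (1 / ((q ^ n) ^ 2 * q ^ m)) * X) * PS q (q / q ^ n) * PS q (q / (q ^ n * q ^ m))

def Uu (q : K) (m n : ℕ) : K⟦X⟧ :=
  - C (1 - q ^ n) * C ((q ^ n / (q ^ (n * n) * q ^ (m * n))) * (qp q n)⁻¹ * (qp q (n + m))⁻¹) *
    X ^ n * PS q (q * (q / q ^ n)) * PS q (q * (q / (q ^ n * q ^ m)))

theorem Tt_tele (q : K) (hq0 : q ≠ 0) (hq : ∀ n : ℕ, 1 - q ^ (n + 1) ≠ 0) (m n : ℕ) :
    Tt q m n - rescale q (Tt q m n) - C (q ^ (m + 2)) * X * rescale q (Tt q (m + 1) n) =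
      Uu q m (n + 1) - Uu q m n := by
  have hx : q ^ n ≠ 0 := pow_ne_zero _ hq0
  have hM : q ^ m ≠ 0 := pow_ne_zero _ hq0
  have hd : 1 - q * q ^ n * q ^ m ≠ 0 := by
    have := hq (n + m); convert this using 2; ring
  have hd1 : 1 - q * q ^ n ≠ 0 := by
    have := hq n; convert this using 2; ring
  have hb := bracket q (q ^ n) (q ^ m) hx hM hd
  have p1 := PS_step q hq (q / q ^ n)
  have p2 := PS_step q hq (q / (q ^ n * q ^ m))
  have a1 : q * (q / (q ^ n * q ^ (m + 1))) = q / (q ^ n * q ^ m) := by field_simp; ring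
  have a2 : q * (q / q ^ (n + 1)) = q / q ^ n := by field_simp; ring
  have a3 : q * (q / (q ^ (n + 1) * q ^ m)) = q / (q ^ n * q ^ m) := by field_simp; ring
  have i1 : (qp q (n + 1))⁻¹ = (qp q n)⁻¹ * (1 - q * q ^ n)⁻¹ := by
    rw [qp_succ, mul_inv, pow_succ']
  have i2 : (qp q (n + (m + 1)))⁻¹ = (qp q (n + m))⁻¹ * (1 - q * q ^ n * q ^ m)⁻¹ := by
    rw [← add_assoc, qp_succ, mul_inv, pow_succ', pow_add, mul_assoc]
  have i3 : (qp q (n + 1 + m))⁻¹ = (qp q (n + m))⁻¹ * (1 - q * q ^ n * q ^ m)⁻¹ := by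
    rw [← i2]; congr 2; ring
  have rC : ∀ a : K, rescale q (C a : K⟦X⟧) = C a := by
    intro a; ext k; rw [coeff_rescale, coeff_C]; split_ifs with h <;> simp [h]
  set g := (q ^ n / (q ^ (n * n) * q ^ (m * n))) * (qp q n)⁻¹ * (qp q (n + m))⁻¹ with hg
  set P1 := PS q (q * (q / q ^ n)) with hP1
  set P2 := PS q (q * (q / (q ^ n * q ^ m))) with hP2
  have t1 : Tt q m n = C g * X ^ n * P1 * P2 * ((1 - C (1 / ((q^n)^2*q^m)) * X) *
      (1 - C (q/q^n) * X) * (1 - C (q/(q^n*q^m)) * X)) := by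
    rw [Tt, ← hg, p1, p2]; ring
  have t2 : rescale q (Tt q m n) = C g * X ^ n * P1 * P2 *
      (C (q^n) * (1 - C (q/((q^n)^2*q^m)) * X)) := by
    have c2 : (C (q/((q^n)^2*q^m)) : K⟦X⟧) = C (1 / ((q^n)^2*q^m)) * C q := by
      rw [← map_mul]; congr 1; ring
    rw [Tt, ← hg, c2]
    clear_value g
    simp only [map_mul, map_sub, map_one, map_pow, rescale_PS, rescale_X, rC]
    rw [← hP1, ← hP2]; ring
  have t3 : C (q ^ (m + 2)) * X * rescale q (Tt q (m + 1) n) = C g * X ^ n * P1 * P2 *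
      (C (q^2*q^m/(1-q*q^n*q^m)) * X * (1 - C (1 / ((q^n)^2*q^m)) * X) *
      (1 - C (q/(q^n*q^m)) * X)) := by
    simp only [Tt, map_mul, map_sub, map_one, map_pow, rescale_PS, rescale_X, rC]
    rw [← hP1, a1, p2, i2]
    have c1 : q ^ (m+2) * ((q ^ n / (q ^ (n * n) * q ^ ((m+1) * n))) * (qp q n)⁻¹ *
      ((qp q (n + m))⁻¹ * (1 - q * q ^ n * q ^ m)⁻¹)) * q ^ n = g * (q^2*q^m/(1-q*q^n*q^m)) := by
      have : q ^ ((m+1)*n) = q ^ (m * n) * q ^ n := by ring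
      rw [this, hg]; field_simp; ring
    have c2 : 1 / ((q^n)^2*q^(m+1)) * q = 1 / ((q^n)^2*q^m) := by field_simp; ring
    rw [← c2]
    have c1' := congrArg (C : K →+* K⟦X⟧) c1
    simp only [map_mul, map_pow] at c1' ⊢
    linear_combination (X ^ (n + 1) * P1 * P2 * (1 - C (q / (q ^ n * q ^ m)) * X) *
      (1 - C (1 / ((q^n)^2*q^(m+1))) * C q * X)) * c1'
  have t4 : Uu q m (n + 1) = C g * X ^ n * P1 * P2 *
      (- (C (1/((q^n)^2*q^m)/(1-q*q^n*q^m)) * X * (1 - C (q/q^n) * X) *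
        (1 - C (q/(q^n*q^m)) * X))) := by
    rw [Uu, a2, a3, p1, p2, i1, i3]
    have c1 : (1 - q ^ (n+1)) * ((q ^ (n+1) / (q ^ ((n+1) * (n+1)) * q ^ (m * (n+1)))) *
      ((qp q n)⁻¹ * (1 - q * q ^ n)⁻¹) * ((qp q (n + m))⁻¹ * (1 - q * q ^ n * q ^ m)⁻¹)) =
        g * (1/((q^n)^2*q^m)/(1-q*q^n*q^m)) := by
      have e1 : q ^ ((n+1)*(n+1)) = q ^ (n * n) * (q ^ n)^2 * q := by ring
      have e2 : q ^ (m*(n+1)) = q ^ (m * n) * q ^ m := by ring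
      have e3 : q ^ (n+1) = q * q ^ n := by ring
      rw [e1, e2, e3, hg]; field_simp
    have c1' := congrArg (C : K →+* K⟦X⟧) c1
    rw [map_mul, map_mul C g] at c1'
    linear_combination (-X ^ (n + 1) * P1 * P2 * (1 - C (q / q ^ n) * X) *
      (1 - C (q / (q ^ n * q ^ m)) * X)) * c1'
  have t5 : Uu q m n = C g * X ^ n * P1 * P2 * (- C (1 - q ^ n)) := by
    rw [Uu, ← hg]; ring
  rw [t2, t3, t1, t4, t5]
  linear_combination (C g * X ^ n * P1 * P2) * hb

theorem coeff_Tt_zero (q : K) (m n k : ℕ) (h : k < n) : coeff k (Tt q m n) = 0 := by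
  rw [Tt, mul_comm (C _) (X ^ n), mul_assoc, mul_assoc, mul_assoc, mul_assoc, coeff_X_pow_mul',
    if_neg (by omega)]

theorem coeff_Uu_zero (q : K) (m n k : ℕ) (h : k < n) : coeff k (Uu q m n) = 0 := by
  rw [Uu, mul_comm (_ * C _) (X ^ n), mul_assoc, mul_assoc, coeff_X_pow_mul',
    if_neg (by omega)]

theorem sum_Tt (q : K) (hq0 : q ≠ 0) (hq : ∀ n : ℕ, 1 - q ^ (n + 1) ≠ 0) (k : ℕ) :
    ∀ m N, k ≤ N → ∑ n ∈ Finset.range (N + 1), coeff k (Tt q m n) =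
      q ^ (k * k + m * k + k) * (qp q k)⁻¹ * (qp q (m + k))⁻¹ := by
  induction k with
  | zero =>
    intro m N _
    rw [Finset.sum_range_succ', Finset.sum_eq_zero]
    · simp [Tt, PS, qp_zero]
    · intro n _; exact coeff_Tt_zero q m (n+1) 0 (by omega)
  | succ k ih =>
    intro m N hN
    have h := Finset.sum_congr rfl (fun n (_ : n ∈ Finset.range (N+1)) =>
      congrArg (coeff (k+1)) (Tt_tele q hq0 hq m n))
    rw [← map_sum, ← map_sum, Finset.sum_range_sub (Uu q m), map_sub,
      coeff_Uu_zero q m (N+1) (k+1) (by omega)] at h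
    have u0 : Uu q m 0 = 0 := by simp [Uu]
    rw [u0, map_sum] at h
    simp only [map_sub, mul_assoc, coeff_C_mul, coeff_succ_X_mul, coeff_rescale, map_zero,
      sub_zero] at h
    rw [Finset.sum_sub_distrib, Finset.sum_sub_distrib, ← Finset.mul_sum, ← Finset.mul_sum,
      ← Finset.mul_sum, ih (m+1) N (by omega)] at h
    apply mul_left_cancel₀ (hq k)
    have e : m + 1 + k = m + (k + 1) := by ring
    rw [e] at h
    have := qp_inv_succ q hq k
    linear_combination h - (q ^ ((k+1) * (k+1) + m * (k+1) + (k+1)) * (qp q (m + (k+1)))⁻¹) * this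

end scalar

section torus
variable {K : Type*} [Field K]

def ad (d : ℕ × ℕ) : Finset ((ℕ × ℕ) × (ℕ × ℕ)) :=
  (Finset.range (d.1 + 1) ×ˢ Finset.range (d.2 + 1)).image
    (fun x => (x, (d.1 - x.1, d.2 - x.2)))

theorem mem_ad {d : ℕ × ℕ} {p : (ℕ × ℕ) × (ℕ × ℕ)} : p ∈ ad d ↔ p.1 + p.2 = d := by
  rcases p with ⟨⟨a, b⟩, ⟨c, e⟩⟩
  rcases d with ⟨d1, d2⟩
  simp only [ad, Finset.mem_image, Finset.mem_product, Finset.mem_range, Prod.mk.injEq,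
    Prod.exists, Prod.mk_add_mk]
  constructor
  · rintro ⟨x, y, h1, ⟨rfl, rfl⟩, h2, h3⟩; omega
  · rintro ⟨h1, h2⟩; exact ⟨a, b, by omega, ⟨rfl, rfl⟩, by omega, by omega⟩

def tq (s : K) (u v : ℕ × ℕ) : K := s ^ ((u.2 : ℤ) * v.1 - (u.1 : ℤ) * v.2)

theorem tq_add_left {s : K} (hs : s ≠ 0) (u v w : ℕ × ℕ) :
    tq s (u + v) w = tq s u w * tq s v w := by
  unfold tq; rw [← zpow_add₀ hs]; congr 1; simp; ring

theorem tq_add_right {s : K} (hs : s ≠ 0) (u v w : ℕ × ℕ) :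
    tq s u (v + w) = tq s u v * tq s u w := by
  unfold tq; rw [← zpow_add₀ hs]; congr 1; simp; ring

theorem tq_zero_left (s : K) (v : ℕ × ℕ) : tq s 0 v = 1 := by simp [tq]
theorem tq_zero_right (s : K) (v : ℕ × ℕ) : tq s v 0 = 1 := by simp [tq]

def QT (_s : Kˣ) : Type _ := ℕ × ℕ → K

instance (s : Kˣ) : Mul (QT s) :=
  ⟨fun f g d => ∑ p ∈ ad d, tq (s : K) p.1 p.2 * f p.1 * g p.2⟩
instance (s : Kˣ) : One (QT s) := ⟨fun d => if d = 0 then 1 else 0⟩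

theorem QT_mul (s : Kˣ) (f g : QT s) (d : ℕ × ℕ) :
    (f * g) d = ∑ p ∈ ad d, tq (s : K) p.1 p.2 * f p.1 * g p.2 := rfl
theorem QT_one (s : Kˣ) (d : ℕ × ℕ) : (1 : QT s) d = if d = 0 then 1 else 0 := rfl

instance (s : Kˣ) : Monoid (QT s) where
  mul_assoc f g h := by
    funext d
    simp only [QT_mul, Finset.sum_mul, Finset.mul_sum, Finset.sum_sigma']
    apply Finset.sum_nbij' (fun x => ⟨(x.2.1, x.2.2 + x.1.2), (x.2.2, x.1.2)⟩)
      (fun x => ⟨(x.1.1 + x.2.1, x.2.2), (x.1.1, x.2.1)⟩)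
    · rintro ⟨⟨a, b⟩, ⟨c, e⟩⟩ hx
      simp only [Finset.mem_sigma, mem_ad] at hx ⊢
      refine ⟨?_, trivial⟩
      rw [← hx.1, ← hx.2, add_assoc]
    · rintro ⟨⟨a, b⟩, ⟨c, e⟩⟩ hx
      simp only [Finset.mem_sigma, mem_ad] at hx ⊢
      refine ⟨?_, trivial⟩
      rw [← hx.1, ← hx.2, add_assoc]
    · rintro ⟨⟨a, b⟩, ⟨c, e⟩⟩ hx
      simp only [Finset.mem_sigma, mem_ad] at hx ⊢
      obtain ⟨h1, h2⟩ := hx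
      subst h2; rfl
    · rintro ⟨⟨a, b⟩, ⟨c, e⟩⟩ hx
      simp only [Finset.mem_sigma, mem_ad] at hx ⊢
      obtain ⟨h1, h2⟩ := hx
      subst h2; rfl
    · rintro ⟨⟨a, b⟩, ⟨c, e⟩⟩ hx
      simp only [Finset.mem_sigma, mem_ad] at hx ⊢
      obtain ⟨h1, h2⟩ := hx
      subst h2
      simp only [tq_add_left s.ne_zero, tq_add_right s.ne_zero]
      ring
  one_mul f := by
    funext d
    rw [QT_mul, Finset.sum_eq_single (0, d)]
    · simp [QT_one, tq_zero_left]
    · rintro ⟨a, b⟩ h1 h2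
      rw [mem_ad] at h1
      by_cases ha : a = 0
      · subst ha; simp at h1; simp [h1] at h2
      · simp [QT_one, ha]
    · intro h; simp [mem_ad] at h
  mul_one f := by
    funext d
    rw [QT_mul, Finset.sum_eq_single (d, 0)]
    · simp [QT_one, tq_zero_right]
    · rintro ⟨a, b⟩ h1 h2
      rw [mem_ad] at h1
      by_cases ha : b = 0
      · subst ha; simp at h1; simp [h1] at h2
      · simp [QT_one, ha]
    · intro h; simp [mem_ad] at h

/-- congruence up to total degree n -/
def Cg {s : Kˣ} (n : ℕ) (f g : QT s) : Prop := ∀ e : ℕ × ℕ, e.1 + e.2 ≤ n → f e = g e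

theorem Cg.refl {s : Kˣ} (n : ℕ) (f : QT s) : Cg n f f := fun _ _ => rfl
theorem Cg.symm {s : Kˣ} {n : ℕ} {f g : QT s} (h : Cg n f g) : Cg n g f :=
  fun e he => (h e he).symm
theorem Cg.trans {s : Kˣ} {n : ℕ} {f g h : QT s} (h1 : Cg n f g) (h2 : Cg n g h) : Cg n f h :=
  fun e he => (h1 e he).trans (h2 e he)
theorem Cg.mul {s : Kˣ} {n : ℕ} {f g f' g' : QT s} (h1 : Cg n f f') (h2 : Cg n g g') :
    Cg n (f * g) (f' * g') := by
  intro e he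
  rw [QT_mul, QT_mul]
  apply Finset.sum_congr rfl
  rintro ⟨a, b⟩ hp
  rw [mem_ad] at hp
  have e1 := congrArg Prod.fst hp
  have e2 := congrArg Prod.snd hp
  simp at e1 e2
  simp only
  rw [h1 a (by omega), h2 b (by omega)]

/-- pushforward of coefficients -/
def ph {s' : Kˣ} (s : Kˣ) (δ : ℕ × ℕ → ℕ × ℕ) (f : QT s') : QT s := Function.extend δ f 0

theorem ph_apply {s' : Kˣ} (s : Kˣ) {δ : ℕ × ℕ → ℕ × ℕ} (hδ : δ.Injective) (f : QT s')
    (u : ℕ × ℕ) : ph s δ f (δ u) = f u := hδ.extend_apply _ _ _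

theorem ph_apply' {s' : Kˣ} (s : Kˣ) {δ : ℕ × ℕ → ℕ × ℕ} (f : QT s')
    (x : ℕ × ℕ) (h : ¬ ∃ u, δ u = x) : ph s δ f x = 0 := Function.extend_apply' _ _ _ h

theorem ph_comp {s'' s' : Kˣ} (s : Kˣ) {δ δ' : ℕ × ℕ → ℕ × ℕ} (hδ : δ.Injective)
    (hδ' : δ'.Injective) (f : QT s'') : ph s δ (ph s' δ' f) = ph s (δ ∘ δ') f := by
  funext x
  by_cases h : ∃ u, δ u = x
  · obtain ⟨u, rfl⟩ := h
    rw [ph_apply s hδ]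
    by_cases h' : ∃ v, δ' v = u
    · obtain ⟨v, rfl⟩ := h'
      rw [ph_apply s' hδ']
      exact (ph_apply s (hδ.comp hδ') f v).symm
    · rw [ph_apply' s' _ _ h', ph_apply' s]
      rintro ⟨v, hv⟩
      exact h' ⟨v, hδ hv⟩
  · rw [ph_apply' s _ _ h, ph_apply' s]
    rintro ⟨v, hv⟩
    exact h ⟨_, hv⟩

theorem ph_mul {s' : Kˣ} (s : Kˣ) {δ : ℕ × ℕ → ℕ × ℕ} (hδ : δ.Injective)
    (hadd : ∀ u v, δ (u + v) = δ u + δ v) (htw : ∀ u v, tq (s : K) (δ u) (δ v) = tq (s' : K) u v)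
    (f g : QT s') : ph s δ (f * g) = ph s δ f * ph s δ g := by
  funext x
  rw [QT_mul]
  by_cases h : ∃ u, δ u = x
  · obtain ⟨w, rfl⟩ := h
    rw [ph_apply s hδ, QT_mul]
    apply Finset.sum_of_injOn (fun p => (δ p.1, δ p.2))
    · rintro ⟨a, b⟩ _ ⟨c, d⟩ _ hh
      simp only [Prod.mk.injEq] at hh
      rw [hδ hh.1, hδ hh.2]
    · rintro ⟨a, b⟩ hp
      simp only [Finset.mem_coe, mem_ad] at hp ⊢
      rw [← hadd, hp]
    · rintro ⟨a, b⟩ hp hn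
      simp only [mem_ad] at hp
      by_cases ha : ∃ u, δ u = a
      · by_cases hb : ∃ v, δ v = b
        · obtain ⟨u, rfl⟩ := ha
          obtain ⟨v, rfl⟩ := hb
          exfalso
          apply hn
          refine ⟨(u, v), ?_, rfl⟩
          rw [← hadd] at hp
          simp only [Finset.mem_coe, mem_ad]
          exact hδ hp
        · simp only [ph_apply' s g b hb, mul_zero]
      · simp only [ph_apply' s f a ha, mul_zero, zero_mul]
    · rintro ⟨a, b⟩ hp
      simp only [htw, ph_apply s hδ]
  · rw [ph_apply' s _ _ h, Finset.sum_eq_zero]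
    rintro ⟨a, b⟩ hp
    simp only [mem_ad] at hp
    by_cases ha : ∃ u, δ u = a
    · by_cases hb : ∃ v, δ v = b
      · obtain ⟨u, rfl⟩ := ha
        obtain ⟨v, rfl⟩ := hb
        exact absurd ⟨u + v, (hadd u v).trans hp⟩ h
      · simp only [ph_apply' s g b hb, mul_zero]
    · simp only [ph_apply' s f a ha, mul_zero, zero_mul]

theorem swap_inj : (Prod.swap : ℕ × ℕ → ℕ × ℕ).Injective := Prod.swap_injective

theorem sw_apply {s : Kˣ} (f : QT s) (x : ℕ × ℕ) : ph s Prod.swap f x = f x.swap := by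
  conv_lhs => rw [← Prod.swap_swap x]
  exact ph_apply s swap_inj f x.swap

theorem sw_mul {s : Kˣ} (f g : QT s) :
    ph s Prod.swap (f * g) = ph s Prod.swap g * ph s Prod.swap f := by
  funext x
  rw [sw_apply, QT_mul, QT_mul]
  apply Finset.sum_nbij' (fun p => (p.2.swap, p.1.swap)) (fun p => (p.2.swap, p.1.swap))
  · rintro ⟨a, b⟩ hp
    simp only [mem_ad] at hp ⊢
    rw [← Prod.swap_swap x, ← hp, add_comm]; rfl
  · rintro ⟨a, b⟩ hp
    simp only [mem_ad] at hp ⊢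
    rw [← hp, add_comm]; rfl
  · intros; simp
  · intros; simp
  · rintro ⟨a, b⟩ hp
    simp only [sw_apply, Prod.swap_swap]
    have : tq (s : K) b.swap a.swap = tq (s : K) a b := by
      unfold tq; congr 1; simp; ring
    rw [this]; ring

/-- one-parameter series -/
def Ed (s : Kˣ) (c : PowerSeries K) (d : ℕ × ℕ) : QT s := fun e =>
  if e = (kOf d e * d.1, kOf d e * d.2) then PowerSeries.coeff (kOf d e) c else 0

theorem kOf_smul {d : ℕ × ℕ} (hd : d ≠ 0) (k : ℕ) : kOf d (k * d.1, k * d.2) = k := by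
  unfold kOf
  split_ifs with h
  · have : d.2 ≠ 0 := fun h2 => hd (Prod.ext h h2)
    exact Nat.mul_div_cancel _ (by omega)
  · exact Nat.mul_div_cancel _ (by omega)

theorem Ed_apply {s : Kˣ} (c : PowerSeries K) {d : ℕ × ℕ} (hd : d ≠ 0) (k : ℕ) :
    Ed s c d (k * d.1, k * d.2) = PowerSeries.coeff k c := by
  unfold Ed; rw [kOf_smul hd]; simp

theorem Ed_apply' {s : Kˣ} (c : PowerSeries K) {d : ℕ × ℕ} (x : ℕ × ℕ)
    (h : ¬ ∃ k, (k * d.1, k * d.2) = x) : Ed s c d x = 0 := by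
  unfold Ed; rw [if_neg]; intro h'; exact h ⟨_, h'.symm⟩

theorem Ed_mul {s : Kˣ} (c c' : PowerSeries K) {d : ℕ × ℕ} (hd : d ≠ 0) :
    Ed s (c * c') d = Ed s c d * Ed s c' d := by
  have inj : ∀ i j : ℕ, (i * d.1, i * d.2) = (j * d.1, j * d.2) → i = j := by
    intro i j h; rw [← kOf_smul hd i, h, kOf_smul hd]
  funext x
  rw [QT_mul]
  by_cases h : ∃ k, (k * d.1, k * d.2) = x
  · obtain ⟨k, rfl⟩ := h
    rw [Ed_apply _ hd, PowerSeries.coeff_mul]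
    apply Finset.sum_of_injOn (fun p => ((p.1 * d.1, p.1 * d.2), (p.2 * d.1, p.2 * d.2)))
    · rintro ⟨a, b⟩ _ ⟨a', b'⟩ _ hh
      have h1 := congrArg Prod.fst hh
      have h2 := congrArg Prod.snd hh
      rw [inj a a' h1, inj b b' h2]
    · rintro ⟨a, b⟩ hp
      simp only [Finset.mem_coe, mem_ad, Finset.HasAntidiagonal.mem_antidiagonal] at hp ⊢
      rw [← hp]; ext <;> simp <;> ring
    · rintro ⟨a, b⟩ hp hn
      simp only [mem_ad] at hp
      by_cases ha : ∃ i, (i * d.1, i * d.2) = a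
      · by_cases hb : ∃ i, (i * d.1, i * d.2) = b
        · obtain ⟨i, rfl⟩ := ha
          obtain ⟨j, rfl⟩ := hb
          exfalso
          apply hn
          refine ⟨(i, j), ?_, rfl⟩
          simp only [Finset.mem_coe, Finset.HasAntidiagonal.mem_antidiagonal]
          apply inj
          rw [← hp]; ext <;> simp <;> ring
        · simp only [Ed_apply' c' b hb, mul_zero]
      · simp only [Ed_apply' c a ha, mul_zero, zero_mul]
    · rintro ⟨a, b⟩ hp
      simp only [Ed_apply _ hd]
      have : tq (s : K) (a * d.1, a * d.2) (b * d.1, b * d.2) = 1 := by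
        unfold tq; simp only; rw [show (((a * d.2 : ℕ) : ℤ) * ((b * d.1 : ℕ) : ℤ) -
          ((a * d.1 : ℕ) : ℤ) * ((b * d.2 : ℕ) : ℤ)) = 0 by push_cast; ring]; simp
      rw [this]; ring
  · rw [Ed_apply' _ _ h, Finset.sum_eq_zero]
    rintro ⟨a, b⟩ hp
    simp only [mem_ad] at hp
    by_cases ha : ∃ i, (i * d.1, i * d.2) = a
    · by_cases hb : ∃ i, (i * d.1, i * d.2) = b
      · obtain ⟨i, rfl⟩ := ha
        obtain ⟨j, rfl⟩ := hb
        exfalso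
        apply h
        refine ⟨i + j, ?_⟩
        rw [← hp]; ext <;> simp <;> ring
      · simp only [Ed_apply' c' b hb, mul_zero]
    · simp only [Ed_apply' c a ha, mul_zero, zero_mul]

theorem Ed_one {s : Kˣ} {d : ℕ × ℕ} (hd : d ≠ 0) : Ed s (1 : PowerSeries K) d = 1 := by
  funext x
  by_cases h : ∃ k, (k * d.1, k * d.2) = x
  · obtain ⟨k, rfl⟩ := h
    rw [Ed_apply _ hd, QT_one, PowerSeries.coeff_one]
    congr 1
    rw [eq_iff_iff]
    constructor
    · rintro rfl; simp
    · intro h; rw [← kOf_smul hd k, h]; simp [kOf]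
  · rw [Ed_apply' _ _ h, QT_one, if_neg]
    rintro rfl
    exact h ⟨0, by simp⟩

theorem Ed_cg {s : Kˣ} (c : PowerSeries K) (hc : PowerSeries.coeff 0 c = 1) {d : ℕ × ℕ} {n : ℕ}
    (hd : n < d.1 + d.2) : Cg n (Ed s c d) 1 := by
  have hd0 : d ≠ 0 := by rintro rfl; simp at hd
  intro x hx
  by_cases h : ∃ k, (k * d.1, k * d.2) = x
  · obtain ⟨k, rfl⟩ := h
    have : k = 0 := by
      rcases k with _ | k
      · rfl
      · exfalso; simp only at hx; nlinarith
    subst this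
    rw [Ed_apply _ hd0, hc]; simp [QT_one]
  · rw [Ed_apply' _ _ h, QT_one, if_neg]
    rintro rfl
    exact h ⟨0, by simp⟩

theorem ph_Ed {s' : Kˣ} (s : Kˣ) {δ : ℕ × ℕ → ℕ × ℕ} (hδ : δ.Injective)
    (hsm : ∀ (k : ℕ) (u : ℕ × ℕ), δ (k * u.1, k * u.2) = (k * (δ u).1, k * (δ u).2))
    (c : PowerSeries K) (d : ℕ × ℕ) (hd : d ≠ 0) (hd' : δ d ≠ 0) :
    ph s δ (Ed s' c d) = Ed s c (δ d) := by
  funext x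
  by_cases h : ∃ k, (k * (δ d).1, k * (δ d).2) = x
  · obtain ⟨k, rfl⟩ := h
    rw [Ed_apply _ hd', ← hsm, ph_apply s hδ, Ed_apply _ hd]
  · rw [Ed_apply' _ _ h]
    by_cases h' : ∃ u, δ u = x
    · obtain ⟨u, rfl⟩ := h'
      rw [ph_apply s hδ, Ed_apply']
      rintro ⟨k, rfl⟩
      exact h ⟨k, (hsm k d).symm⟩
    · exact ph_apply' s _ _ h'

def dl (d e u : ℕ × ℕ) : ℕ × ℕ := (u.1 * d.1 + u.2 * e.1, u.1 * d.2 + u.2 * e.2)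

theorem dl_add (d e u v : ℕ × ℕ) : dl d e (u + v) = dl d e u + dl d e v := by
  ext <;> simp [dl] <;> ring

theorem dl_smul (d e : ℕ × ℕ) (k : ℕ) (u : ℕ × ℕ) :
    dl d e (k * u.1, k * u.2) = (k * (dl d e u).1, k * (dl d e u).2) := by
  ext <;> simp [dl] <;> ring

theorem dl_inj {d e : ℕ × ℕ} {D : ℕ} (hD : D ≠ 0) (h : d.1 * e.2 = d.2 * e.1 + D) :
    (dl d e).Injective := by
  rintro ⟨a, b⟩ ⟨a', b'⟩ hh
  simp only [dl, Prod.mk.injEq] at hh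
  obtain ⟨h1, h2⟩ := hh
  have hD' : (D : ℤ) ≠ 0 := by exact_mod_cast hD
  zify at h h1 h2
  have ea : (D : ℤ) * (a - a') = 0 := by
    linear_combination (e.2 : ℤ) * h1 - (e.1 : ℤ) * h2 - ((a : ℤ) - a') * h
  have eb : (D : ℤ) * (b - b') = 0 := by
    linear_combination (d.1 : ℤ) * h2 - (d.2 : ℤ) * h1 - ((b : ℤ) - b') * h
  have := (mul_eq_zero.1 ea).resolve_left hD'
  have := (mul_eq_zero.1 eb).resolve_left hD'
  ext <;> simp <;> omega

theorem dl_tq {s s' : Kˣ} {d e : ℕ × ℕ} {D : ℕ} (h : d.1 * e.2 = d.2 * e.1 + D)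
    (hs : s' = s ^ D) (u v : ℕ × ℕ) :
    tq (s : K) (dl d e u) (dl d e v) = tq (s' : K) u v := by
  unfold tq
  rw [hs, Units.val_pow_eq_pow_val, ← zpow_natCast, ← zpow_mul]
  congr 1
  zify at h
  simp only [dl]; push_cast
  linear_combination ((u.2 : ℤ) * v.1 - u.1 * v.2) * h

theorem diag_comm {s : Kˣ} (f g : QT s) (hf : ∀ x, x.1 ≠ x.2 → f x = 0)
    (hg : ∀ x, x.1 ≠ x.2 → g x = 0) : f * g = g * f := by
  funext x
  rw [QT_mul, QT_mul]
  apply Finset.sum_nbij' Prod.swap Prod.swap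
  · rintro ⟨a, b⟩ hp; simp only [mem_ad, Prod.swap] at hp ⊢; rw [add_comm]; exact hp
  · rintro ⟨a, b⟩ hp; simp only [mem_ad, Prod.swap] at hp ⊢; rw [add_comm]; exact hp
  · intros; simp
  · intros; simp
  · rintro ⟨a, b⟩ hp
    simp only [Prod.swap]
    by_cases h1 : a.1 = a.2
    · by_cases h2 : b.1 = b.2
      · simp only [tq, h1, h2, sub_self, zpow_zero, mul_comm]; ring
      · rw [hg b h2]; ring
    · rw [hf a h1]; ring

end torus

section core
variable {K : Type*} [Field K]

theorem coeff_JS (q a : K) (k : ℕ) : PowerSeries.coeff k (JS q a) = a ^ k * (qp q k)⁻¹ := by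
  simp [JS]

theorem coeff_PS (q a : K) (k : ℕ) :
    PowerSeries.coeff k (PS q a) = (-1) ^ k * q ^ (k.choose 2) * a ^ k * (qp q k)⁻¹ := by
  simp [PS]

theorem Ed10_apply (s : Kˣ) (c : PowerSeries K) (a b : ℕ) :
    Ed s c (1, 0) (a, b) = if b = 0 then PowerSeries.coeff a c else 0 := by
  unfold Ed kOf; simp

theorem Ed01_apply (s : Kˣ) (c : PowerSeries K) (a b : ℕ) :
    Ed s c (0, 1) (a, b) = if a = 0 then PowerSeries.coeff b c else 0 := by
  unfold Ed kOf; simp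

theorem Ed11_apply (s : Kˣ) (c : PowerSeries K) (a b : ℕ) :
    Ed s c (1, 1) (a, b) = if a = b then PowerSeries.coeff a c else 0 := by
  unfold Ed kOf; simp [eq_comm]

theorem Ed10_mul (s : Kˣ) (c : PowerSeries K) (f : QT s) (n j : ℕ) :
    (Ed s c (1, 0) * f) (n, j) = ∑ m ∈ Finset.range (n + 1),
      ((s : K) ^ ((n - m) * j))⁻¹ * PowerSeries.coeff (n - m) c * f (m, j) := by
  rw [QT_mul]
  symm
  apply Finset.sum_of_injOn (fun m => ((n - m, 0), (m, j)))
  · intro a _ b _ h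
    simp only [Prod.mk.injEq] at h
    exact h.2.1
  · intro a h
    simp only [Finset.coe_range, Set.mem_Iio] at h
    simp only [Finset.mem_coe, mem_ad, Prod.mk_add_mk, Prod.mk.injEq]
    omega
  · rintro ⟨⟨a, b⟩, ⟨a', b'⟩⟩ hp hn
    simp only [mem_ad, Prod.mk_add_mk, Prod.mk.injEq] at hp
    simp only [Ed10_apply]
    rw [if_neg]; · ring
    rintro rfl
    apply hn
    refine ⟨a', by simp; omega, ?_⟩
    simp; omega
  · intro m hm
    simp only [Ed10_apply, if_true, tq]
    congr 2
    rw [← zpow_natCast, ← zpow_neg]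
    congr 1
    push_cast; ring

theorem mul_Ed01 (s : Kˣ) (c : PowerSeries K) (f : QT s) (i n : ℕ) :
    (f * Ed s c (0, 1)) (i, n) = ∑ k ∈ Finset.range (n + 1),
      ((s : K) ^ (i * (n - k)))⁻¹ * f (i, k) * PowerSeries.coeff (n - k) c := by
  rw [QT_mul]
  symm
  apply Finset.sum_of_injOn (fun k => ((i, k), (0, n - k)))
  · intro a _ b _ h
    simp only [Prod.mk.injEq] at h
    exact h.1.2
  · intro a h
    simp only [Finset.coe_range, Set.mem_Iio] at h
    simp only [Finset.mem_coe, mem_ad, Prod.mk_add_mk, Prod.mk.injEq]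
    omega
  · rintro ⟨⟨a, b⟩, ⟨a', b'⟩⟩ hp hn
    simp only [mem_ad, Prod.mk_add_mk, Prod.mk.injEq] at hp
    simp only [Ed01_apply]
    rw [if_neg]; · ring
    rintro rfl
    apply hn
    refine ⟨b, by simp; omega, ?_⟩
    simp; omega
  · intro m hm
    simp only [Ed01_apply, if_true, tq]
    congr 2
    rw [← zpow_natCast, ← zpow_neg]
    congr 1
    push_cast; ring

theorem Ed01_mul_Ed10 (s : Kˣ) (c c' : PowerSeries K) (i j : ℕ) :
    (Ed s c (0, 1) * Ed s c' (1, 0)) (i, j) =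
      (s : K) ^ (i * j) * PowerSeries.coeff j c * PowerSeries.coeff i c' := by
  rw [QT_mul, Finset.sum_eq_single ((0, j), (i, 0))]
  · simp only [Ed01_apply, Ed10_apply, if_true, tq]
    congr 2
    rw [← zpow_natCast]
    congr 1
    push_cast; ring
  · rintro ⟨⟨a, b⟩, ⟨a', b'⟩⟩ hp hn
    simp only [mem_ad, Prod.mk_add_mk, Prod.mk.injEq] at hp
    simp only [Ed01_apply, Ed10_apply]
    by_cases ha : a = 0
    · by_cases hb : b' = 0
      · subst ha hb
        exfalso; apply hn; simp; omega
      · simp [hb]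
    · simp [ha]
  · intro h; simp [mem_ad] at h

theorem pow_sq_choose (s : K) (m : ℕ) : s ^ (m * m) = (s ^ 2) ^ (m.choose 2) * s ^ m := by
  rw [← pow_mul, ← pow_add]
  congr 1
  induction m with
  | zero => rfl
  | succ m ih => rw [choose_two_succ]; nlinarith

theorem Rr_le (q : K) {n k : ℕ} (h : k ≤ n) : Rr q n k = (qp q (n - k))⁻¹ := by simp [Rr, h]
theorem Rr_gt (q : K) {n k : ℕ} (h : ¬ k ≤ n) : Rr q n k = 0 := by simp [Rr, h]

theorem pentagon0 (s : Kˣ) (hq : ∀ n : ℕ, 1 - ((s : K) ^ 2) ^ (n + 1) ≠ 0) :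
    Ed s (JS ((s : K) ^ 2) (-s)) (0, 1) * Ed s (JS ((s : K) ^ 2) (-s)) (1, 0) =
    Ed s (JS ((s : K) ^ 2) (-s)) (1, 0) * (Ed s (JS ((s : K) ^ 2) (-s)) (1, 1) *
      Ed s (JS ((s : K) ^ 2) (-s)) (0, 1)) := by
  funext ⟨n, j⟩
  have hs := s.ne_zero
  rw [Ed01_mul_Ed10, Ed10_mul]
  simp only [mul_Ed01]
  have key := PIrec ((s : K) ^ 2) hq n j
  have e1 : ∀ m ∈ Finset.range (n + 1), ((s : K) ^ ((n - m) * j))⁻¹ *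
      PowerSeries.coeff (n - m) (JS ((s : K) ^ 2) (-s)) *
      ∑ k ∈ Finset.range (j + 1), ((s : K) ^ (m * (j - k)))⁻¹ *
        Ed s (JS ((s : K) ^ 2) (-s)) (1, 1) (m, k) *
        PowerSeries.coeff (j - k) (JS ((s : K) ^ 2) (-s)) =
      ((s : K) ^ (n * j))⁻¹ * (-s) ^ (n + j) *
      ((-1) ^ m * ((s : K) ^ 2) ^ (m.choose 2) * Rr ((s : K) ^ 2) n m * (qp ((s : K) ^ 2) m)⁻¹ *
        Rr ((s : K) ^ 2) j m) := by
    intro m hm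
    have hm' : m ≤ n := by simpa [Nat.lt_succ_iff] using hm
    by_cases hj : m ≤ j
    · rw [Finset.sum_eq_single m]
      · obtain ⟨a, rfl⟩ := Nat.exists_eq_add_of_le hm'
        obtain ⟨b, rfl⟩ := Nat.exists_eq_add_of_le hj
        have h3 := pow_sq_choose (s : K) m
        simp only [Ed11_apply, if_true, coeff_JS, Rr_le _ hm', Rr_le _ hj, Nat.add_sub_cancel_left]
        have h4 : ((s : K) ^ 2) ^ (m.choose 2) = (s : K) ^ (m * m) * ((s : K) ^ m)⁻¹ := by
          rw [h3]; field_simp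
        rw [h4, show (m + a) * (m + b) = m * m + (a * (m + b) + m * b) by ring,
          show m + a + (m + b) = m + m + a + b by ring]
        simp only [neg_pow (s : K), pow_add, mul_inv]
        have : ((-1 : K) ^ m) * (-1) ^ m = 1 := by rw [← mul_pow]; simp
        field_simp
        try ring_nf
        try simp [mul_comm m 2, pow_mul]
      · intro k _ hk
        rw [Ed11_apply, if_neg (Ne.symm hk)]; ring
      · intro h; simp at h; omega
    · rw [Rr_gt _ hj, Finset.sum_eq_zero]
      · ring
      · intro k hk
        simp at hk
        rw [Ed11_apply, if_neg (by omega)]; ring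
  rw [Finset.sum_congr rfl e1, ← Finset.mul_sum, key]
  simp only [coeff_JS, pow_add]
  rw [← pow_mul, two_mul, pow_add]
  field_simp

end core

section core2
variable {K : Type*} [Field K]

/-- base two-variable series -/
def Gz (s : Kˣ) : QT (s ^ 2) := fun x =>
  PowerSeries.coeff x.1 (JS ((s : K) ^ 2) (-s)) *
    PowerSeries.coeff x.2 (PS ((s : K) ^ 2) ((s : K) ^ 2))

theorem Gz_apply (s : Kˣ) (i j : ℕ) : Gz s (i, j) =
  PowerSeries.coeff i (JS ((s : K) ^ 2) (-s)) *
    PowerSeries.coeff j (PS ((s : K) ^ 2) ((s : K) ^ 2)) := rfl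

theorem dl11_inj : (dl (1, 1) (0, 1)).Injective :=
  dl_inj (D := 1) one_ne_zero (by norm_num)

theorem choose_sub (m b : ℕ) :
    (m + b).choose 2 + (m + b) + m.choose 2 = b.choose 2 + b + (m + b) * m := by
  induction m with
  | zero => simp
  | succ m ih =>
    have h1 := choose_two_succ m
    have h2 := choose_two_succ (m + b)
    rw [show m + 1 + b = m + b + 1 by ring, h1, h2]
    nlinarith

theorem Gz_step (s : Kˣ) (hq : ∀ n : ℕ, 1 - ((s : K) ^ 2) ^ (n + 1) ≠ 0) :
    Gz s = Ed (s ^ 2) (JS ((s : K) ^ 2) (-s)) (1, 0) * ph (s ^ 2) (dl (1, 1) (0, 1)) (Gz s) := by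
  funext ⟨n, j⟩
  have hs := s.ne_zero
  rw [Ed10_mul]
  have key := PIrec ((s : K) ^ 2) hq n j
  have e1 : ∀ m ∈ Finset.range (n + 1), (((s ^ 2 : Kˣ) : K) ^ ((n - m) * j))⁻¹ *
      PowerSeries.coeff (n - m) (JS ((s : K) ^ 2) (-s)) *
        ph (s ^ 2) (dl (1, 1) (0, 1)) (Gz s) (m, j) =
      ((((s : K) ^ 2) ^ (n * j))⁻¹ * (-s) ^ n * (-1) ^ j * ((s : K) ^ 2) ^ (j.choose 2 + j)) *
      ((-1) ^ m * ((s : K) ^ 2) ^ (m.choose 2) * Rr ((s : K) ^ 2) n m * (qp ((s : K) ^ 2) m)⁻¹ *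
        Rr ((s : K) ^ 2) j m) := by
    intro m hm
    have hm' : m ≤ n := by simpa [Nat.lt_succ_iff] using hm
    by_cases hj : m ≤ j
    · obtain ⟨a, rfl⟩ := Nat.exists_eq_add_of_le hm'
      obtain ⟨b, rfl⟩ := Nat.exists_eq_add_of_le hj
      have : (m, m + b) = dl (1, 1) (0, 1) (m, b) := by simp [dl]
      have h5 : ph (s ^ 2) (dl (1, 1) (0, 1)) (Gz s) (m, m + b) = Gz s (m, b) := by
        rw [this]; exact ph_apply _ dl11_inj _ _
      rw [h5, Gz_apply]
      simp only [coeff_JS, coeff_PS, Rr_le _ hm', Rr_le _ hj, Nat.add_sub_cancel_left,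
        Units.val_pow_eq_pow_val]
      generalize hQ : (s : K) ^ 2 = Q
      have hQ0 : Q ≠ 0 := by rw [← hQ]; exact pow_ne_zero _ hs
      have h4 : Q ^ ((m + b).choose 2 + (m + b)) * Q ^ (m.choose 2) =
          Q ^ (b.choose 2) * Q ^ b * (Q ^ ((m + b) * m)) := by
        rw [← pow_add, ← pow_add, ← pow_add, choose_sub]
      have h6 : Q ^ ((m + b).choose 2 + (m + b)) =
          Q ^ (b.choose 2) * Q ^ b * (Q ^ ((m + b) * m)) * (Q ^ (m.choose 2))⁻¹ := by
        rw [← h4]; field_simp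
      rw [h6, show (m + a) * (m + b) = (m + b) * m + a * (m + b) by ring]
      simp only [neg_pow (s : K), pow_add, mul_inv]
      field_simp
      try ring_nf
      try simp [mul_comm m 2, pow_mul]
    · rw [Rr_gt _ hj, ph_apply']
      · ring
      · rintro ⟨⟨x, y⟩, h⟩
        simp [dl] at h
        omega
  rw [Finset.sum_congr rfl e1, ← Finset.mul_sum, key, Gz_apply, coeff_JS, coeff_PS]
  simp only [pow_add]
  field_simp

/-- series supported on x.2 ≤ x.1 -/
def HG (s : Kˣ) (F : ℕ → PowerSeries K) : QT s := fun x =>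
  if x.2 ≤ x.1 then PowerSeries.coeff x.2 (F (x.1 - x.2)) else 0

theorem HG_apply (s : Kˣ) (F : ℕ → PowerSeries K) (p k : ℕ) :
    HG s F (p + k, k) = PowerSeries.coeff k (F p) := by
  simp [HG]

theorem HG_apply' (s : Kˣ) (F : ℕ → PowerSeries K) {a b : ℕ} (h : ¬ ∃ p, a = p + b) :
    HG s F (a, b) = 0 := by
  unfold HG; rw [if_neg]; intro h'; exact h ⟨a - b, by simp at h'; omega⟩

theorem HG_mul_Ed (s : Kˣ) (F : ℕ → PowerSeries K) (c : PowerSeries K) :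
    HG s F * Ed s c (1, 1) = HG s (fun p => F p * PowerSeries.rescale (((s : K) ^ p)⁻¹) c) := by
  funext ⟨a, b⟩
  rw [QT_mul]
  by_cases h : ∃ p, a = p + b
  · obtain ⟨p, rfl⟩ := h
    rw [HG_apply, PowerSeries.coeff_mul]
    symm
    apply Finset.sum_of_injOn (fun x => ((p + x.1, x.1), (x.2, x.2)))
    · rintro ⟨x, y⟩ _ ⟨x', y'⟩ _ h
      simp only [Prod.mk.injEq] at h ⊢
      omega
    · rintro ⟨x, y⟩ h
      simp only [Finset.mem_coe, mem_ad, Finset.HasAntidiagonal.mem_antidiagonal] at h ⊢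
      simp only [Prod.mk_add_mk, Prod.mk.injEq]
      omega
    · rintro ⟨⟨x, y⟩, ⟨x', y'⟩⟩ hp hn
      simp only [mem_ad, Prod.mk_add_mk, Prod.mk.injEq] at hp
      simp only [Ed11_apply]
      rw [if_neg]; · ring
      rintro rfl
      apply hn
      refine ⟨(y, x'), by simp; omega, ?_⟩
      simp; omega
    · rintro ⟨x, y⟩ h
      simp only [Ed11_apply, HG_apply, if_true, PowerSeries.coeff_rescale]
      have : tq (s : K) (p + x, x) (y, y) = (((s : K) ^ p)⁻¹) ^ y := by
        unfold tq
        rw [inv_pow, ← pow_mul, ← zpow_natCast, ← zpow_neg]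
        congr 1
        push_cast; ring
      rw [this]; ring
  · rw [HG_apply' _ _ h, Finset.sum_eq_zero]
    rintro ⟨⟨x, y⟩, ⟨x', y'⟩⟩ hp
    simp only [mem_ad, Prod.mk_add_mk, Prod.mk.injEq] at hp
    simp only [Ed11_apply]
    by_cases h1 : x' = y'
    · rw [HG_apply']
      · ring
      · rintro ⟨p, hp'⟩
        exact h ⟨p, by omega⟩
    · rw [if_neg h1]; ring

theorem HG_mul_sw (s : Kˣ) (F F' : ℕ → PowerSeries K) (m k : ℕ) :
    (HG s F * ph s Prod.swap (HG s F')) (m + k, k) =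
    ∑ n ∈ Finset.range (k + 1), ((s : K) ^ ((n + m) * n))⁻¹ * PowerSeries.coeff (k - n)
      (PowerSeries.rescale (((s : K) ^ n)⁻¹) (F (n + m)) *
       PowerSeries.rescale (((s : K) ^ (n + m))⁻¹) (F' n)) := by
  rw [QT_mul]
  simp only [PowerSeries.coeff_mul, Finset.mul_sum, Finset.sum_sigma', sw_apply]
  symm
  apply Finset.sum_of_injOn (fun x => ((x.1 + m + x.2.1, x.2.1), (x.2.2, x.1 + x.2.2)))
  · rintro ⟨n, x, y⟩ _ ⟨n', x', y'⟩ _ h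
    simp only [Prod.mk.injEq] at h
    obtain ⟨⟨h1, h2⟩, h3, h4⟩ := h
    obtain rfl : n = n' := by omega
    subst h2 h3; rfl
  · rintro ⟨n, x, y⟩ h
    simp only [Finset.mem_coe, mem_ad, Finset.HasAntidiagonal.mem_antidiagonal, Finset.mem_sigma,
      Finset.mem_range] at h ⊢
    simp only [Prod.mk_add_mk, Prod.mk.injEq]
    omega
  · rintro ⟨⟨x, y⟩, ⟨x', y'⟩⟩ hp hn
    simp only [mem_ad, Prod.mk_add_mk, Prod.mk.injEq] at hp
    simp only [Prod.swap]
    by_cases h1 : ∃ p, x = p + y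
    · by_cases h2 : ∃ p, y' = p + x'
      · obtain ⟨p, rfl⟩ := h1
        obtain ⟨n, rfl⟩ := h2
        exfalso; apply hn
        refine ⟨⟨n, (y, x')⟩, ?_, ?_⟩
        · simp only [Finset.mem_coe, Finset.HasAntidiagonal.mem_antidiagonal, Finset.mem_sigma,
            Finset.mem_range]
          omega
        · simp only [Prod.mk.injEq]; exact ⟨⟨by omega, trivial⟩, trivial⟩
      · rw [HG_apply' _ F' h2]; ring
    · rw [HG_apply' _ F h1]; ring
  · rintro ⟨n, x, y⟩ h
    simp only [Prod.swap, HG_apply, PowerSeries.coeff_rescale]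
    have : tq (s : K) (n + m + x, x) (y, n + y) =
        ((s : K) ^ ((n + m) * n))⁻¹ * (((s : K) ^ n)⁻¹) ^ x * (((s : K) ^ (n + m))⁻¹) ^ y := by
      unfold tq
      rw [inv_pow, inv_pow, ← pow_mul, ← pow_mul, ← mul_inv, ← mul_inv, ← pow_add, ← pow_add,
        ← zpow_natCast, ← zpow_neg]
      congr 1
      push_cast; ring
    rw [this]; ring

end core2

section core3
variable {K : Type*} [Field K]

theorem dl1011_inj : (dl (1, 0) (1, 1)).Injective :=
  dl_inj (D := 1) one_ne_zero (by norm_num)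

theorem G_eq_HG (s : Kˣ) : ph (s ^ 2) (dl (1, 0) (1, 1)) (Gz s) =
    HG (s ^ 2) (fun p => PowerSeries.C (PowerSeries.coeff p (JS ((s : K) ^ 2) (-s))) *
      PS ((s : K) ^ 2) ((s : K) ^ 2)) := by
  funext ⟨a, b⟩
  by_cases h : ∃ p, a = p + b
  · obtain ⟨p, rfl⟩ := h
    rw [HG_apply, PowerSeries.coeff_C_mul]
    have : (p + b, b) = dl (1, 0) (1, 1) (p, b) := by simp [dl]
    rw [this, ph_apply _ dl1011_inj, Gz_apply]
  · rw [HG_apply' _ _ h, ph_apply']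
    rintro ⟨⟨x, y⟩, hh⟩
    simp [dl] at hh
    exact h ⟨x, by omega⟩

theorem sw_Ed (s : Kˣ) (c : PowerSeries K) (d : ℕ × ℕ) (hd : d ≠ 0) :
    ph s Prod.swap (Ed s c d) = Ed s c d.swap := by
  apply ph_Ed s swap_inj (fun k u => rfl) c d hd
  intro h
  apply hd
  rw [← Prod.swap_swap d, h]; rfl

theorem sw_sw (s : Kˣ) (f : QT s) : ph s Prod.swap (ph s Prod.swap f) = f := by
  funext x; rw [sw_apply, sw_apply, Prod.swap_swap]

theorem core_half (s : Kˣ) (hq : ∀ n : ℕ, 1 - ((s : K) ^ 2) ^ (n + 1) ≠ 0) (m k : ℕ) :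
    (Ed (s ^ 2) (JS ((s : K) ^ 2) (-s)) (0, 1) * Ed (s ^ 2) (JS ((s : K) ^ 2) (-s)) (1, 0) :
      QT (s ^ 2)) (m + k, k) =
    (ph (s ^ 2) (dl (1, 0) (1, 1)) (Gz s) * Ed (s ^ 2) (1 - PowerSeries.X) (1, 1) *
      ph (s ^ 2) Prod.swap (ph (s ^ 2) (dl (1, 0) (1, 1)) (Gz s)) : QT (s ^ 2)) (m + k, k) := by
  have hs := s.ne_zero
  rw [G_eq_HG, HG_mul_Ed, HG_mul_sw, Ed01_mul_Ed10]
  simp only [coeff_JS, Units.val_pow_eq_pow_val]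
  have hss : (-(s : K)) ^ 2 = (s : K) ^ 2 := by ring
  generalize hQ : (s : K) ^ 2 = q at *
  have hq0 : q ≠ 0 := by rw [← hQ]; exact pow_ne_zero _ hs
  have key := sum_Tt q hq0 hq k m k le_rfl
  have e1 : ∀ n ∈ Finset.range (k + 1), (q ^ ((n + m) * n))⁻¹ * PowerSeries.coeff (k - n)
      (PowerSeries.rescale ((q ^ n)⁻¹) (PowerSeries.C ((-(s : K)) ^ (n + m) * (qp q (n + m))⁻¹) *
          PS q q * PowerSeries.rescale ((q ^ (n + m))⁻¹) (1 - PowerSeries.X)) *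
       PowerSeries.rescale ((q ^ (n + m))⁻¹) (PowerSeries.C ((-(s : K)) ^ n * (qp q n)⁻¹) *
          PS q q)) = (-(s : K)) ^ m * PowerSeries.coeff k (Tt q m n) := by
    intro n hn
    have hn' : n ≤ k := by simpa [Nat.lt_succ_iff] using hn
    obtain ⟨j, rfl⟩ := Nat.exists_eq_add_of_le hn'
    rw [Nat.add_sub_cancel_left, ← PowerSeries.coeff_C_mul, ← PowerSeries.coeff_C_mul,
      ← PowerSeries.coeff_X_pow_mul _ n j, add_comm j n]
    congr 1
    have hsn : (-(s : K)) ^ n * (-(s : K)) ^ n = q ^ n := by rw [← mul_pow, ← pow_two, hss]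
    simp only [map_mul, map_sub, map_one, rescale_PS, PowerSeries.rescale_X]
    have rC : ∀ a b : K, PowerSeries.rescale a (PowerSeries.C b) = PowerSeries.C b := by
      intro a b; ext i; rw [PowerSeries.coeff_rescale, PowerSeries.coeff_C]
      split_ifs with h
      · subst h; simp
      · simp
    simp only [rC]
    unfold Tt
    rw [show q / q ^ n = (q ^ n)⁻¹ * q by field_simp,
      show q / (q ^ n * q ^ m) = (q ^ (n + m))⁻¹ * q by rw [pow_add]; field_simp]
    have hA : q ^ n / (q ^ (n * n) * q ^ (m * n)) =
        (-(s : K)) ^ n * (-(s : K)) ^ n * (q ^ ((n + m) * n))⁻¹ := by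
      rw [hsn, add_mul, pow_add]; field_simp
    have hB : 1 / ((q ^ n) ^ 2 * q ^ m) = (q ^ n)⁻¹ * (q ^ (n + m))⁻¹ := by
      rw [pow_add]; field_simp
    rw [hA, hB]
    simp only [map_mul, map_pow, pow_add]
    ring
  rw [Finset.sum_congr rfl e1, ← Finset.mul_sum, key]
  have hsk : (-(s : K)) ^ k * (-(s : K)) ^ k = q ^ k := by rw [← mul_pow, ← pow_two, hss]
  rw [pow_add, pow_add, ← hsk, pow_add, add_mul, pow_add]
  ring

theorem core_id (s : Kˣ) (hq : ∀ n : ℕ, 1 - ((s : K) ^ 2) ^ (n + 1) ≠ 0) :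
    Ed (s ^ 2) (JS ((s : K) ^ 2) (-s)) (0, 1) * Ed (s ^ 2) (JS ((s : K) ^ 2) (-s)) (1, 0) =
    ph (s ^ 2) (dl (1, 0) (1, 1)) (Gz s) * Ed (s ^ 2) (1 - PowerSeries.X) (1, 1) *
      ph (s ^ 2) Prod.swap (ph (s ^ 2) (dl (1, 0) (1, 1)) (Gz s)) := by
  funext ⟨a, b⟩
  rcases le_total b a with h | h
  · obtain ⟨m, rfl⟩ := Nat.exists_eq_add_of_le' h
    exact core_half s hq m b
  · obtain ⟨m, rfl⟩ := Nat.exists_eq_add_of_le' h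
    have h1 := core_half s hq m a
    replace h1 := (sw_apply _ (a, m + a)).trans (h1.trans (sw_apply _ (a, m + a)).symm)
    simp only [sw_mul, sw_sw] at h1
    rw [sw_Ed _ _ _ (by simp), sw_Ed _ _ _ (by simp), sw_Ed _ _ _ (by simp)] at h1
    simp only [Prod.swap] at h1
    rw [h1, mul_assoc]

theorem pentagon (s : Kˣ) (hq : ∀ n : ℕ, 1 - ((s : K) ^ 2) ^ (n + 1) ≠ 0) (d e : ℕ × ℕ)
    (h : d.1 * e.2 = d.2 * e.1 + 1) :
    Ed s (JS ((s : K) ^ 2) (-s)) e * Ed s (JS ((s : K) ^ 2) (-s)) d =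
    Ed s (JS ((s : K) ^ 2) (-s)) d * (Ed s (JS ((s : K) ^ 2) (-s)) (d + e) *
      Ed s (JS ((s : K) ^ 2) (-s)) e) := by
  have hi := dl_inj one_ne_zero h
  have hd : d ≠ 0 := by rintro rfl; simp at h
  have he : e ≠ 0 := by rintro rfl; simp at h
  have hde : d + e ≠ 0 := by
    intro h'
    apply hd
    have h1 := congrArg Prod.fst h'
    have h2 := congrArg Prod.snd h'
    simp at h1 h2
    ext
    · exact h1.1
    · exact h2.1
  have hm := ph_mul s hi (dl_add d e) (dl_tq (s := s) (s' := s) h (by simp))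
  have h1 : dl d e (1, 0) = d := by simp [dl]
  have h2 : dl d e (0, 1) = e := by simp [dl]
  have h3 : dl d e (1, 1) = d + e := by ext <;> simp [dl]
  have key := congrArg (ph s (dl d e)) (pentagon0 s hq)
  rw [hm, hm, hm, ph_Ed s hi (dl_smul d e) _ _ (by simp) (by rwa [h2]),
    ph_Ed s hi (dl_smul d e) _ _ (by simp) (by rwa [h1]),
    ph_Ed s hi (dl_smul d e) _ _ (by simp) (by rwa [h3]), h1, h2, h3] at key
  exact key

/-- Gd -/
def Gd (s : Kˣ) (d : ℕ × ℕ) : QT s := ph s (dl d (2, 2)) (Gz s)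

theorem Gd_step (s : Kˣ) (hq : ∀ n : ℕ, 1 - ((s : K) ^ 2) ^ (n + 1) ≠ 0) (d : ℕ × ℕ)
    (h : d.1 = d.2 + 1) :
    Gd s d = Ed s (JS ((s : K) ^ 2) (-s)) d * Gd s (d + (2, 2)) := by
  have h' : d.1 * (2, 2).2 = d.2 * (2, 2).1 + 2 := by simp; omega
  have hi := dl_inj two_ne_zero h'
  have hm := ph_mul s hi (dl_add d (2, 2)) (dl_tq (s := s) (s' := s ^ 2) h' rfl)
  have h1 : dl d (2, 2) (1, 0) = d := by simp [dl]
  have hd : d ≠ 0 := by rintro rfl; simp at h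
  unfold Gd
  conv_lhs => rw [Gz_step s hq]
  rw [hm, ph_Ed s hi (dl_smul d _) _ _ (by simp) (by rwa [h1]), h1, ph_comp s hi dl11_inj]
  congr 2
  funext u
  ext <;> simp [dl] <;> ring

theorem Gd_cg (s : Kˣ) (d : ℕ × ℕ) (h : d.1 = d.2 + 1) (n : ℕ) (hn : n < d.1 + d.2) :
    Cg n (Gd s d) (Ed s (PS ((s : K) ^ 2) ((s : K) ^ 2)) (2, 2)) := by
  have h' : d.1 * (2, 2).2 = d.2 * (2, 2).1 + 2 := by simp; omega
  have hi := dl_inj two_ne_zero h'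
  intro x hx
  by_cases hex : ∃ k, (k * 2, k * 2) = x
  · obtain ⟨k, rfl⟩ := hex
    rw [Ed_apply (d := (2, 2)) _ (by simp)]
    have : (k * 2, k * 2) = dl d (2, 2) (0, k) := by simp [dl]
    unfold Gd
    rw [this, ph_apply _ hi, Gz_apply]
    simp [coeff_JS, qp_zero]
  · rw [Ed_apply' (d := (2, 2)) _ _ hex]
    unfold Gd
    apply ph_apply'
    rintro ⟨⟨a, b⟩, rfl⟩
    rcases a with _ | a
    · exact hex ⟨b, by simp [dl]⟩
    · simp only [dl] at hx
      nlinarith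

theorem core_t (s : Kˣ) (hq : ∀ n : ℕ, 1 - ((s : K) ^ 2) ^ (n + 1) ≠ 0) :
    Ed s (JS ((s : K) ^ 2) (-s)) (1, 2) * Ed s (JS ((s : K) ^ 2) (-s)) (1, 0) =
    Gd s (1, 0) * Ed s (1 - PowerSeries.X) (2, 2) * ph s Prod.swap (Gd s (2, 1)) := by
  have h : (1, 0).1 * (1, 2).2 = (1, 0).2 * (1, 2).1 + 2 := by norm_num
  have hi := dl_inj two_ne_zero h
  have hm := ph_mul s hi (dl_add _ _) (dl_tq (s := s) (s' := s ^ 2) h rfl)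
  have key := congrArg (ph s (dl (1, 0) (1, 2))) (core_id s hq)
  rw [hm, hm, hm, ph_Ed s hi (dl_smul _ _) _ _ (by simp) (by simp [dl]),
    ph_Ed s hi (dl_smul _ _) _ _ (by simp) (by simp [dl]),
    ph_Ed s hi (dl_smul _ _) _ _ (by simp) (by simp [dl]),
    ph_comp s hi dl1011_inj, ph_comp (s ^ 2) swap_inj dl1011_inj,
    ph_comp s hi (swap_inj.comp dl1011_inj)] at key
  have hi2 : (dl (2, 1) (2, 2)).Injective := dl_inj (D := 2) two_ne_zero (by norm_num)
  unfold Gd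
  rw [ph_comp s swap_inj hi2]
  have e1 : dl (1, 0) (1, 2) ∘ dl (1, 0) (1, 1) = dl (1, 0) (2, 2) := by
    funext u; ext <;> simp [dl] <;> ring
  have e2 : dl (1, 0) (1, 2) ∘ Prod.swap ∘ dl (1, 0) (1, 1) = Prod.swap ∘ dl (2, 1) (2, 2) := by
    funext u; ext <;> simp [dl] <;> ring
  rw [e1, e2] at key
  simpa [dl] using key

end core3

section alg

def PXm {Q : Type*} [Monoid Q] (X : ℕ → Q) : ℕ → Q
  | 0 => 1
  | M + 1 => PXm X M * X (2 * M)

def PYm {Q : Type*} [Monoid Q] (Y : ℕ → Q) : ℕ → Q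
  | 0 => 1
  | M + 1 => Y (2 * M + 1) * PYm Y M

def SXm {Q : Type*} [Monoid Q] (X : ℕ → Q) : ℕ → Q
  | 0 => 1
  | M + 1 => SXm X M * (X M * X M)

def SYm {Q : Type*} [Monoid Q] (Y : ℕ → Q) : ℕ → Q
  | 0 => 1
  | M + 1 => (Y M * Y M) * SYm Y M

theorem alg1 {Q : Type*} [Monoid Q] (X : ℕ → Q) (c : Q)
    (hX : ∀ i, c * X i = X i * (X (i + 1) * c)) (M : ℕ) :
    X 0 * c * c * PXm X M = SXm X (2 * M) * X (2 * M) * c * c := by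
  have hcc : ∀ i, c * (c * X i) = X i * (X (i + 1) * (X (i + 1) * (X (i + 2) * (c * c)))) := by
    intro i
    have hX' : ∀ i z, c * (X i * z) = X i * (X (i + 1) * (c * z)) := by
      intro i z; rw [← mul_assoc, hX]; simp only [mul_assoc]
    simp only [hX, hX', mul_assoc]
  induction M with
  | zero => simp [PXm, SXm]
  | succ M ih =>
    have : 2 * (M + 1) = 2 * M + 1 + 1 := by ring
    rw [this]
    simp only [PXm, SXm]
    rw [← mul_assoc, ih]
    have := hcc (2 * M)
    simp only [mul_assoc] at this ⊢
    rw [this]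

theorem alg2 {Q : Type*} [Monoid Q] (Y : ℕ → Q) (c : Q)
    (hY : ∀ i, Y i * c = c * (Y (i + 1) * Y i)) (M : ℕ) :
    PYm Y M * (c * c * Y 1 * Y 0 * Y 0) = c * c * Y (2 * M + 1) * SYm Y (2 * M + 1) := by
  have hcc : ∀ i, Y i * (c * c) = c * (c * (Y (i + 2) * (Y (i + 1) * (Y (i + 1) * Y i)))) := by
    intro i
    have hY' : ∀ i z, Y i * (c * z) = c * (Y (i + 1) * (Y i * z)) := by
      intro i z; rw [← mul_assoc, hY]; simp only [mul_assoc]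
    simp only [hY, hY', mul_assoc]
  induction M with
  | zero => simp [PYm, SYm, mul_assoc]
  | succ M ih =>
    have : 2 * (M + 1) + 1 = 2 * M + 1 + 1 + 1 := by ring
    rw [this]
    simp only [PYm]
    rw [mul_assoc, ih, SYm.eq_2 Y (2 * M + 1 + 1), SYm.eq_2 Y (2 * M + 1)]
    have h2 := hcc (2 * M + 1)
    rw [mul_assoc, ← mul_assoc (Y (2 * M + 1)), h2]
    simp only [mul_assoc]

theorem alg3 {Q : Type*} [Monoid Q] (X0 Y0 Y1 c : Q) (h1 : Y0 * X0 = X0 * (c * Y0))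
    (h2 : Y0 * c = c * (Y1 * Y0)) :
    Y0 * Y0 * (X0 * X0) = X0 * c * c * (Y1 * X0) * (c * c * Y1 * Y0 * Y0) := by
  have h1' : ∀ z, Y0 * (X0 * z) = X0 * (c * (Y0 * z)) := by
    intro z; rw [← mul_assoc, h1]; simp only [mul_assoc]
  have h2' : ∀ z, Y0 * (c * z) = c * (Y1 * (Y0 * z)) := by
    intro z; rw [← mul_assoc, h2]; simp only [mul_assoc]
  simp only [h1, h2, h1', h2', mul_assoc]

end alg

section fin
variable {K : Type*} [Field K]

/-- short names -/
def EX (s : Kˣ) (i : ℕ) : QT s := Ed s (JS ((s : K) ^ 2) (-s)) (i + 1, i)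
def EY (s : Kˣ) (i : ℕ) : QT s := Ed s (JS ((s : K) ^ 2) (-s)) (i, i + 1)
def EC (s : Kˣ) : QT s := Ed s (JS ((s : K) ^ 2) (-s)) (1, 1)
def EU (s : Kˣ) : QT s := Ed s (PS ((s : K) ^ 2) ((s : K) ^ 2)) (2, 2)
def EV (s : Kˣ) : QT s := Ed s (PS ((s : K) ^ 2) 1) (2, 2)

variable (s : Kˣ)

theorem EX_cg (i n : ℕ) (h : n < 2 * i + 1) : Cg n (EX s i) 1 :=
  Ed_cg _ (by simp [coeff_JS, qp_zero]) (by simp only; omega)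
theorem EY_cg (i n : ℕ) (h : n < 2 * i + 1) : Cg n (EY s i) 1 :=
  Ed_cg _ (by simp [coeff_JS, qp_zero]) (by simp only; omega)

theorem hXrel (hq : ∀ n : ℕ, 1 - ((s : K) ^ 2) ^ (n + 1) ≠ 0)
    (i : ℕ) : EC s * EX s i = EX s i * (EX s (i + 1) * EC s) :=
  pentagon s hq (i + 1, i) (1, 1) (by simp)
theorem hYrel (hq : ∀ n : ℕ, 1 - ((s : K) ^ 2) ^ (n + 1) ≠ 0)
    (i : ℕ) : EY s i * EC s = EC s * (EY s (i + 1) * EY s i) := by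
  have := pentagon s hq (1, 1) (i, i + 1) (by simp)
  rwa [show ((1, 1) + (i, i + 1) : ℕ × ℕ) = (i + 1, i + 1 + 1) by ext <;> simp <;> omega] at this
theorem hBA (hq : ∀ n : ℕ, 1 - ((s : K) ^ 2) ^ (n + 1) ≠ 0)
    : EY s 0 * EX s 0 = EX s 0 * (EC s * EY s 0) :=
  pentagon s hq (1, 0) (0, 1) (by simp)

theorem chainX (hq : ∀ n : ℕ, 1 - ((s : K) ^ 2) ^ (n + 1) ≠ 0)
    (M : ℕ) : Gd s (1, 0) = PXm (EX s) M * Gd s (2 * M + 1, 2 * M) := by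
  induction M with
  | zero => simp [PXm]
  | succ M ih =>
    rw [ih, PXm, Gd_step s hq (2 * M + 1, 2 * M) rfl, mul_assoc]
    rfl

theorem chainY (hq : ∀ n : ℕ, 1 - ((s : K) ^ 2) ^ (n + 1) ≠ 0)
    (M : ℕ) : ph s Prod.swap (Gd s (2, 1)) =
    ph s Prod.swap (Gd s (2 * M + 2, 2 * M + 1)) * PYm (EY s) M := by
  induction M with
  | zero => simp [PYm]
  | succ M ih =>
    rw [ih, PYm, Gd_step s hq (2 * M + 2, 2 * M + 1) rfl, sw_mul, sw_Ed _ _ _ (by simp),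
      mul_assoc]
    rfl

theorem SX_cg (n N k : ℕ) (h : n < 2 * N + 1) : Cg n (SXm (EX s) (N + k)) (SXm (EX s) N) := by
  induction k with
  | zero => exact Cg.refl _ _
  | succ k ih =>
    have h1 := EX_cg s (N + k) n (by omega)
    have := ih.mul (h1.mul h1)
    simp only [mul_one, one_mul] at this
    exact this

theorem SY_cg (n N k : ℕ) (h : n < 2 * N + 1) : Cg n (SYm (EY s) (N + k)) (SYm (EY s) N) := by
  induction k with
  | zero => exact Cg.refl _ _
  | succ k ih =>
    have h1 := EY_cg s (N + k) n (by omega)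
    have := (h1.mul h1).mul ih
    simp only [mul_one, one_mul] at this
    exact this

theorem sw_cg {n : ℕ} {f g : QT s} (h : Cg n f g) :
    Cg n (ph s Prod.swap f) (ph s Prod.swap g) := by
  intro e he
  rw [sw_apply, sw_apply]
  exact h _ (by simp [Prod.swap]; omega)

theorem Ed_diag (c : PowerSeries K) (a : ℕ) (x : ℕ × ℕ) (hx : x.1 ≠ x.2) :
    Ed s c (a, a) x = 0 := by
  apply Ed_apply'
  rintro ⟨k, rfl⟩
  exact hx rfl

theorem main_cg (hq : ∀ n : ℕ, 1 - ((s : K) ^ 2) ^ (n + 1) ≠ 0)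
    (n N : ℕ) (hN : n ≤ N) :
    Cg n (SXm (EX s) N * (EC s * EC s * EC s * EC s * EU s * EV s * SYm (EY s) N))
      (EY s 0 * EY s 0 * (EX s 0 * EX s 0)) := by
  rw [alg3 _ _ (EY s 1) (EC s) (hBA s hq) (hYrel s hq 0)]
  have hW : Ed s (PS ((s : K) ^ 2) ((s : K) ^ 2)) (2, 2) * Ed s (1 - PowerSeries.X) (2, 2) *
      Ed s (PS ((s : K) ^ 2) ((s : K) ^ 2)) (2, 2) = EU s * EV s := by
    rw [mul_assoc, ← Ed_mul _ _ (by simp)]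
    unfold EU EV
    rw [PS_step _ hq 1]
    simp
  have hc1 : EC s * EU s = EU s * EC s := diag_comm _ _ (Ed_diag s _ 1) (Ed_diag s _ 2)
  have hc2 : EC s * EV s = EV s * EC s := diag_comm _ _ (Ed_diag s _ 1) (Ed_diag s _ 2)
  have h1 : Cg n (EY s 1 * EX s 0)
      (PXm (EX s) N * (EU s * EV s) * PYm (EY s) N) := by
    have e : EY s 1 * EX s 0 = _ := core_t s hq
    rw [e, chainX s hq N, chainY s hq N, ← hW]
    have g1 := Gd_cg s (2 * N + 1, 2 * N) rfl n (by simp only; omega)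
    have g2 := sw_cg s (Gd_cg s (2 * N + 2, 2 * N + 1) rfl n (by simp only; omega))
    rw [sw_Ed _ _ _ (by simp)] at g2
    have := (((Cg.refl n (PXm (EX s) N)).mul g1).mul
      (Cg.refl n (Ed s (1 - PowerSeries.X) (2, 2)))).mul (g2.mul (Cg.refl n (PYm (EY s) N)))
    simpa only [mul_assoc, Prod.swap] using this
  have h2 := ((Cg.refl n (EX s 0 * EC s * EC s)).mul h1).mul
    (Cg.refl n (EC s * EC s * EY s 1 * EY s 0 * EY s 0))
  refine Cg.symm (h2.trans ?_)
  have e2 : EX s 0 * EC s * EC s * (PXm (EX s) N * (EU s * EV s) * PYm (EY s) N) *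
      (EC s * EC s * EY s 1 * EY s 0 * EY s 0) =
      SXm (EX s) (N + N) * EX s (2 * N) * (EC s * EC s * EC s * EC s * EU s * EV s) *
        (EY s (2 * N + 1) * SYm (EY s) (N + (N + 1))) := by
    calc _ = (EX s 0 * EC s * EC s * PXm (EX s) N) * (EU s * EV s) * (PYm (EY s) N *
        (EC s * EC s * EY s 1 * EY s 0 * EY s 0)) := by simp only [mul_assoc]
      _ = SXm (EX s) (2 * N) * EX s (2 * N) * (EC s * EC s * (EU s * (EV s * EC s) * EC s)) *
        (EY s (2 * N + 1) * SYm (EY s) (2 * N + 1)) := by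
        rw [alg1 _ _ (hXrel s hq), alg2 _ _ (hYrel s hq)]; simp only [mul_assoc]
      _ = _ := by
        rw [show N + N = 2 * N by ring, show N + (N + 1) = 2 * N + 1 by ring]
        have c1 : ∀ z, EU s * (EC s * z) = EC s * (EU s * z) := by
          intro z; rw [← mul_assoc, ← hc1, mul_assoc]
        have c2 : ∀ z, EV s * (EC s * z) = EC s * (EV s * z) := by
          intro z; rw [← mul_assoc, ← hc2, mul_assoc]
        simp only [mul_assoc, c1, c2]
  rw [e2]
  have k1 := (SX_cg s n N N (by omega)).mul (EX_cg s (2 * N) n (by omega))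
  have k2 := (EY_cg s (2 * N + 1) n (by omega)).mul (SY_cg s n N (N + 1) (by omega))
  have k3 := (k1.mul (Cg.refl n (EC s * EC s * EC s * EC s * EU s * EV s))).mul k2
  simpa only [mul_one, one_mul, mul_assoc] using k3

end fin

section trans

theorem qh_ne : qh ≠ 0 := RatFunc.X_ne_zero

theorem hq_FF (n : ℕ) : 1 - (qh ^ 2) ^ (n + 1) ≠ 0 := by
  rw [← pow_mul]
  intro h
  have h1 : (algebraMap (Polynomial ℚ) (RatFunc ℚ)) (1 - Polynomial.X ^ (2 * (n + 1))) = 0 := by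
    rw [map_sub, map_one, map_pow, RatFunc.algebraMap_X]; exact h
  have h2 := (map_eq_zero_iff _ (RatFunc.algebraMap_injective ℚ)).1 h1
  have h3 := congrArg (Polynomial.eval 0) h2
  simp at h3

def sU : FFˣ := Units.mk0 qh qh_ne

def toQ (f : T13) : QT sU := fun x => (f x : FF)

theorem toQ_inj {f g : T13} {x : ℕ × ℕ} (h : toQ f x = toQ g x) : f x = g x := Subtype.ext h

theorem toQ_one : toQ oneT = 1 := by
  funext x
  rw [QT_one]
  unfold toQ oneT
  split_ifs with h1 h2 h2
  · rfl
  · exact absurd h1 h2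
  · exact absurd h2 h1
  · rfl

theorem tw_coe (u v : ℕ × ℕ) : ((tw u v : Rcal) : FF) = tq (sU : FF) u v := by
  unfold tw tq
  have : (sU : FF) = qh := rfl
  rw [this, zpow_sub₀ qh_ne]
  push_cast
  simp only [qhR, qhinvR]
  rw [inv_pow, div_eq_mul_inv]
  rw [← zpow_natCast, ← zpow_natCast]
  push_cast
  rfl

theorem toQ_mul (f g : T13) : toQ (mulT f g) = toQ f * toQ g := by
  funext d
  rw [QT_mul]
  unfold toQ mulT ad
  rw [Finset.sum_image]
  · push_cast
    apply Finset.sum_congr rfl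
    intro x _
    rw [tw_coe]
  · intro x _ y _ h
    exact congrArg Prod.fst h

theorem toQ_prod (l : List T13) : toQ (prodT l) = (l.map toQ).prod := by
  induction l with
  | nil => exact toQ_one
  | cons a l ih =>
    rw [List.map_cons, List.prod_cons, ← ih, ← toQ_mul]; rfl

theorem toQ_pow (f : T13) (k : ℕ) : toQ (powT f k) = toQ f ^ k := by
  unfold powT
  rw [toQ_prod, List.map_replicate, List.prod_replicate]

theorem Ecoeff_coe (lam : Rcal) (k : ℕ) : ((Ecoeff lam k : Rcal) : FF) =
    PowerSeries.coeff k (JS (qh ^ 2) (-(qh * lam))) := by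
  rw [coeff_JS]
  unfold Ecoeff qp
  push_cast
  rw [neg_pow (qh * (lam : FF)), mul_pow, ← Finset.prod_inv_distrib]
  simp only [qhR, dinvR, pow_mul]
  ring

theorem toQ_E (lam : Rcal) (d : ℕ × ℕ) :
    toQ (Edlog lam d) = Ed sU (JS (qh ^ 2) (-(qh * lam))) d := by
  funext x
  unfold toQ Edlog Ed
  split_ifs with h
  · exact Ecoeff_coe _ _
  · rfl

theorem toQ_E1 (d : ℕ × ℕ) :
    toQ (Edlog 1 d) = Ed sU (JS ((sU : FF) ^ 2) (-(sU : FF))) d := by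
  rw [toQ_E]
  have : (sU : FF) = qh := rfl
  rw [this]; simp

theorem toQ_Esq (d : ℕ × ℕ) : toQ (Esq d) =
    Ed sU (JS ((sU : FF) ^ 2) (-(sU : FF))) d * Ed sU (JS ((sU : FF) ^ 2) (-(sU : FF))) d := by
  unfold Esq
  rw [toQ_pow, pow_two, toQ_E1]

theorem toQ_SX (N : ℕ) :
    (((List.range N).map fun i => Esq (i + 1, i)).map toQ).prod = SXm (EX sU) N := by
  induction N with
  | zero => rfl
  | succ N ih =>
    rw [List.range_succ, List.map_append, List.map_append, List.prod_append, ih]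
    simp only [List.map_cons, List.map_nil, List.prod_cons, List.prod_nil, mul_one, SXm, toQ_Esq]
    rfl

theorem toQ_SY (N : ℕ) :
    (((List.range N).reverse.map fun i => Esq (i, i + 1)).map toQ).prod = SYm (EY sU) N := by
  induction N with
  | zero => rfl
  | succ N ih =>
    rw [List.range_succ, List.reverse_append, List.reverse_singleton, List.singleton_append,
      List.map_cons, List.map_cons, List.prod_cons, ih]
    simp only [SYm, toQ_Esq]
    rfl

theorem toQ_inv (U : T13) (lam : Rcal) (a : FF) (ha : -(qh * (lam : FF)) = a)
    (h : mulT U (Edlog lam (2, 2)) = oneT) : toQ U = Ed sU (PS (qh ^ 2) a) (2, 2) := by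
  have h1 := congrArg toQ h
  rw [toQ_mul, toQ_one, toQ_E, ha] at h1
  apply left_inv_eq_right_inv h1
  rw [← Ed_mul _ _ (by simp), JS_mul_PS _ hq_FF, Ed_one (by simp)]

end trans

/-- In the quantum torus `𝕋`, the partial products `P_N` (with the two
middle factors the inverses `U` of `E(-q^{1/2}t^{(2,2)})` and `V` of
`E(-q^{-1/2}t^{(2,2)})`) converge coefficientwise as `N → ∞`, with limit
`E(t^{(0,1)})² · E(t^{(1,0)})²`. -/
theorem quantum_dilog_identity (U V : T13)
    (hU₁ : mulT U (Edlog (-qhR) (2, 2)) = oneT) (hU₂ : mulT (Edlog (-qhR) (2, 2)) U = oneT)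
    (hV₁ : mulT V (Edlog (-qhinvR) (2, 2)) = oneT)
    (hV₂ : mulT (Edlog (-qhinvR) (2, 2)) V = oneT) :
    ∀ e : ℕ × ℕ, ∃ N₀ : ℕ, ∀ N : ℕ, N₀ ≤ N →
      Ppartial U V N e = mulT (Esq (0, 1)) (Esq (1, 0)) e := by
  intro e
  refine ⟨e.1 + e.2, fun N hN => ?_⟩
  apply toQ_inj
  have hU : toQ U = EU sU := toQ_inv U (-qhR) (qh ^ 2) (by simp [qhR, pow_two]) hU₁
  have hV : toQ V = EV sU :=
    toQ_inv V (-qhinvR) 1 (by simp [qhinvR, mul_inv_cancel₀ qh_ne]) hV₁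
  have key := main_cg sU hq_FF (e.1 + e.2) N hN e le_rfl
  have hL : toQ (Ppartial U V N) = SXm (EX sU) N *
      (EC sU * EC sU * EC sU * EC sU * EU sU * EV sU * SYm (EY sU) N) := by
    unfold Ppartial
    rw [toQ_prod, List.map_append, List.map_append, List.prod_append, List.prod_append, toQ_SX,
      toQ_SY]
    have hc : toQ (powT (Edlog 1 (1, 1)) 4) = EC sU ^ 4 := by rw [toQ_pow, toQ_E1]; rfl
    simp only [List.map_cons, List.map_nil, List.prod_cons, List.prod_nil, mul_one, hc, hU, hV]
    rw [show (4 : ℕ) = 1 + 1 + 1 + 1 by norm_num]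
    simp only [pow_add, pow_one, mul_assoc]
  have hR : toQ (mulT (Esq (0, 1)) (Esq (1, 0))) =
      EY sU 0 * EY sU 0 * (EX sU 0 * EX sU 0) := by
    rw [toQ_mul, toQ_Esq, toQ_Esq]
    rfl
  rw [hL, hR]
  exact key
end
end
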